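/- arXiv:1204.6650 — 5 statements merged into one kernel-verified Lean document; each statement's English description precedes it below -/
import Mathlib

section
/- If X has mean zero, variance one, and density p with finite Fisher information, then the total variation of p − φ satisfies ∫ |p'(x) − φ'(x)| dx ≤ 4 √(I(X‖Z)), where φ is the standard normal density and I(X‖Z) = ∫_{p>0} (p'/p + x)² p dx is the relative Fisher information. -/
open MeasureTheory Real

lemma aux_half (r g w : ℝ → ℝ) (K : ℝ) (hK : 0 ≤ K) (hr : Continuous r) (hg : Integrable g)
    (hrg : ∀ x > 0, r x - r 0 = ∫ t in (0:ℝ)..x, g t * exp (t ^ 2 / 2))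
    (hwc : Continuous w) (hw0 : ∀ x > 0, 0 ≤ w x)
    (hw : ∀ t > 0, ∫⁻ x in Set.Ioi t, ENNReal.ofReal (w x) ≤ ENNReal.ofReal (K * exp (-t ^ 2 / 2))) :
    IntegrableOn (fun x => w x * |r x - r 0|) (Set.Ioi 0) ∧
    ∫ x in Set.Ioi 0, w x * |r x - r 0| ≤ K * ∫ t in Set.Ioi 0, |g t| := by
  have hgm : AEMeasurable g (volume.restrict (Set.Ioi 0)) := hg.aestronglyMeasurable.aemeasurable.restrict
  have key : ∫⁻ x in Set.Ioi 0, ENNReal.ofReal (w x * |r x - r 0|)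
      ≤ ENNReal.ofReal (K * ∫ t in Set.Ioi 0, |g t|) := by
    calc ∫⁻ x in Set.Ioi 0, ENNReal.ofReal (w x * |r x - r 0|)
        ≤ ∫⁻ x in Set.Ioi 0, ∫⁻ t in Set.Ioi 0,
            ENNReal.ofReal (w x) * ‖g t * exp (t ^ 2 / 2)‖ₑ * (Set.indicator {q : ℝ × ℝ | q.2 ≤ q.1} 1 (x, t)) := by
          refine setLIntegral_mono' measurableSet_Ioi fun x hx => ?_
          have hx : 0 < x := hx
          rw [ENNReal.ofReal_mul (hw0 x hx)]
          have h1 : ENNReal.ofReal |r x - r 0| ≤ ∫⁻ t in Set.Ioc 0 x, ‖g t * exp (t ^ 2 / 2)‖ₑ := by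
            rw [hrg x hx, intervalIntegral.integral_of_le hx.le, ← Real.norm_eq_abs, ofReal_norm]
            exact enorm_integral_le_lintegral_enorm _
          calc _ ≤ ENNReal.ofReal (w x) * ∫⁻ t in Set.Ioc 0 x, ‖g t * exp (t ^ 2 / 2)‖ₑ := by gcongr
            _ = ∫⁻ t in Set.Ioc 0 x, ENNReal.ofReal (w x) * ‖g t * exp (t ^ 2 / 2)‖ₑ := by
              rw [lintegral_const_mul' _ _ ENNReal.ofReal_ne_top]
            _ = ∫⁻ t in Set.Ioc 0 x, ENNReal.ofReal (w x) * ‖g t * exp (t ^ 2 / 2)‖ₑ * (Set.indicator {q : ℝ × ℝ | q.2 ≤ q.1} 1 (x, t)) := by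
              refine setLIntegral_congr_fun measurableSet_Ioc fun t ht => ?_
              have : (x, t) ∈ {q : ℝ × ℝ | q.2 ≤ q.1} := ht.2
              simp [Set.indicator_of_mem this]
            _ ≤ _ := lintegral_mono_set fun t ht => ht.1
      _ = ∫⁻ t in Set.Ioi 0, ∫⁻ x in Set.Ioi 0, 
            ENNReal.ofReal (w x) * ‖g t * exp (t ^ 2 / 2)‖ₑ * (Set.indicator {q : ℝ × ℝ | q.2 ≤ q.1} 1 (x, t)) := by
          rw [lintegral_lintegral_swap]
          have h2 : AEMeasurable (fun q : ℝ × ℝ => g q.2) ((volume.restrict (Set.Ioi 0)).prod (volume.restrict (Set.Ioi 0))) :=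
            hgm.comp_snd
          refine AEMeasurable.fun_mul (AEMeasurable.fun_mul ?_ ?_) ?_
          · exact (by fun_prop : Measurable fun q : ℝ × ℝ => ENNReal.ofReal (w q.1)).aemeasurable
          · exact (h2.mul (by fun_prop : Measurable fun q : ℝ × ℝ => exp (q.2 ^ 2 / 2)).aemeasurable).enorm
          · exact (measurable_one.indicator (measurableSet_le measurable_snd measurable_fst)).aemeasurable
      _ ≤ ∫⁻ t in Set.Ioi 0, ENNReal.ofReal (K * |g t|) := by
          refine setLIntegral_mono' measurableSet_Ioi fun t ht => ?_
          have ht : 0 < t := ht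
          calc _ = ∫⁻ x in Set.Ioi 0, Set.indicator (Set.Ici t) (fun x => ‖g t * exp (t ^ 2 / 2)‖ₑ * ENNReal.ofReal (w x)) x := by
                refine lintegral_congr fun x => ?_
                by_cases h : t ≤ x <;> simp [Set.indicator, h, mul_comm]
            _ ≤ ∫⁻ x, Set.indicator (Set.Ici t) (fun x => ‖g t * exp (t ^ 2 / 2)‖ₑ * ENNReal.ofReal (w x)) x :=
                setLIntegral_le_lintegral _ _
            _ = ‖g t * exp (t ^ 2 / 2)‖ₑ * ∫⁻ x in Set.Ioi t, ENNReal.ofReal (w x) := by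
                rw [lintegral_indicator measurableSet_Ici, lintegral_const_mul' _ _ enorm_ne_top]
                rw [setLIntegral_congr Ioi_ae_eq_Ici]
            _ ≤ ‖g t * exp (t ^ 2 / 2)‖ₑ * ENNReal.ofReal (K * exp (-t ^ 2 / 2)) := by gcongr; exact hw t ht
            _ = _ := by
                rw [← ofReal_norm, ← ENNReal.ofReal_mul (norm_nonneg _), Real.norm_eq_abs, abs_mul, abs_of_pos (exp_pos _)]
                congr 1
                have : exp (t ^ 2 / 2) * exp (-t ^ 2 / 2) = 1 := by
                  rw [← exp_add, ← exp_zero]; congr 1; ring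
                linear_combination (|g t| * K) * this
      _ = _ := by
          rw [← integral_const_mul, ofReal_integral_eq_lintegral_ofReal]
          · exact (hg.abs.const_mul K).integrableOn
          · exact Filter.Eventually.of_forall fun t => by positivity
  have hnn : 0 ≤ᵐ[volume.restrict (Set.Ioi 0)] fun x => w x * |r x - r 0| := by
    refine (ae_restrict_iff' measurableSet_Ioi).2 (Filter.Eventually.of_forall fun x hx => ?_)
    exact mul_nonneg (hw0 x hx) (abs_nonneg _)
  have hm : AEStronglyMeasurable (fun x => w x * |r x - r 0|) (volume.restrict (Set.Ioi 0)) :=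
    (by fun_prop : Continuous fun x => w x * |r x - r 0|).aestronglyMeasurable
  refine ⟨⟨hm, ?_⟩, ?_⟩
  · rw [hasFiniteIntegral_iff_ofReal hnn]
    exact key.trans_lt ENNReal.ofReal_lt_top
  · rw [integral_eq_lintegral_of_nonneg_ae hnn hm]
    refine ENNReal.toReal_le_of_le_ofReal ?_ key
    exact mul_nonneg hK (integral_nonneg fun _ => abs_nonneg _)

lemma aux_full (r g w : ℝ → ℝ) (K : ℝ) (hK : 0 ≤ K) (hr : Continuous r) (hg : Integrable g)
    (hrg : ∀ x, r x - r 0 = ∫ t in (0:ℝ)..x, g t * exp (t ^ 2 / 2))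
    (hwc : Continuous w) (hw0 : ∀ x > 0, 0 ≤ w x) (hwe : ∀ x, w (-x) = w x)
    (hw : ∀ t > 0, ∫⁻ x in Set.Ioi t, ENNReal.ofReal (w x) ≤ ENNReal.ofReal (K * exp (-t ^ 2 / 2))) :
    Integrable (fun x => w x * |r x - r 0|) ∧
    ∫ x, w x * |r x - r 0| ≤ K * ∫ t, |g t| := by
  obtain ⟨i1, b1⟩ := aux_half r g w K hK hr hg (fun x _ => hrg x) hwc hw0 hw
  obtain ⟨i2, b2⟩ := aux_half (fun x => r (-x)) (fun x => - g (-x)) w K hK (by fun_prop) hg.comp_neg.neg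
    (fun x _ => by
      have := intervalIntegral.integral_comp_neg (a := 0) (b := x) (fun t => -(g t * exp (t ^ 2 / 2)))
      simp only [neg_zero, even_two, Even.neg_pow] at this ⊢
      simp only [neg_mul]
      rw [this, hrg, intervalIntegral.integral_symm, intervalIntegral.integral_neg]) hwc hw0 hw
  simp only [neg_zero, abs_neg] at i2 b2
  have e2 : (fun x => w x * |r (-x) - r 0|) = fun x => (fun y => w y * |r y - r 0|) (-x) := by
    funext x; simp [hwe]
  rw [e2] at i2 b2
  rw [integral_comp_neg_Ioi 0 (fun y => w y * |r y - r 0|), integral_comp_neg_Ioi 0 (fun y => |g y|)] at b2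
  have i3 : IntegrableOn (fun y => w y * |r y - r 0|) (Set.Iic 0) := by
    have := (integrableOn_Ici_iff_integrableOn_Ioi (by simp)).2 i2
    have h := this.comp_neg
    simpa using h
  simp only [neg_zero] at b2
  refine ⟨?_, ?_⟩
  · rw [← integrableOn_univ, ← Set.Iic_union_Ioi (a := (0:ℝ))]
    exact i3.union i1
  · rw [← intervalIntegral.integral_Iic_add_Ioi i3 i1, ← intervalIntegral.integral_Iic_add_Ioi hg.abs.integrableOn hg.abs.integrableOn]
    linarith

lemma aux_w1 (t : ℝ) (ht : 0 ≤ t) : IntegrableOn (fun x => x * exp (-x ^ 2 / 2)) (Set.Ioi t) ∧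
    ∫ x in Set.Ioi t, x * exp (-x ^ 2 / 2) = exp (-t ^ 2 / 2) := by
  have hd : ∀ x ∈ Set.Ici t, HasDerivAt (fun x : ℝ => -exp (-x ^ 2 / 2)) (x * exp (-x ^ 2 / 2)) x := by
    intro x _
    have := (((hasDerivAt_pow 2 x).fun_neg.div_const 2).exp).fun_neg
    refine this.congr_deriv ?_
    push_cast; ring
  have hp : ∀ x ∈ Set.Ioi t, 0 ≤ x * exp (-x ^ 2 / 2) := fun x hx =>
    mul_nonneg (ht.trans (le_of_lt hx)) (exp_pos _).le
  have hl : Filter.Tendsto (fun x : ℝ => -exp (-x ^ 2 / 2)) Filter.atTop (nhds 0) := by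
    rw [← neg_zero]
    refine (tendsto_exp_atBot.comp ?_).neg
    have : Filter.Tendsto (fun x : ℝ => x ^ 2 / 2) Filter.atTop Filter.atTop :=
      (Filter.tendsto_pow_atTop (by norm_num)).atTop_div_const (by norm_num)
    refine (Filter.tendsto_neg_atTop_atBot.comp this).congr fun x => ?_
    simp only [Function.comp]; ring
  refine ⟨integrableOn_Ioi_deriv_of_nonneg' hd hp hl, ?_⟩
  rw [integral_Ioi_of_hasDerivAt_of_nonneg' hd hp hl]; ring

lemma aux_gi : Integrable (fun x : ℝ => exp (-x ^ 2 / 2)) := by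
  have := integrable_exp_neg_mul_sq (b := 1 / 2) (by norm_num)
  refine this.congr (Filter.Eventually.of_forall fun x => ?_)
  simp only; congr 1; ring

lemma aux_gv : ∫ x : ℝ, exp (-x ^ 2 / 2) = √(2 * π) := by
  have := integral_gaussian (1 / 2)
  rw [show π / (1 / 2) = 2 * π by ring] at this
  rw [← this]; congr 1; funext x; congr 1; ring

lemma aux_gh : ∫ x in Set.Ioi (0:ℝ), exp (-x ^ 2 / 2) = √(2 * π) / 2 := by
  have := integral_gaussian_Ioi (1 / 2)
  rw [show π / (1 / 2) = 2 * π by ring] at this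
  rw [← this]; congr 1; funext x; congr 1; ring

lemma aux_w2 (t : ℝ) (ht : 0 < t) : ∫⁻ x in Set.Ioi t, ENNReal.ofReal (exp (-x ^ 2 / 2))
    ≤ ENNReal.ofReal (√(2 * π) / 2 * exp (-t ^ 2 / 2)) := by
  rw [← lintegral_indicator measurableSet_Ioi, ← lintegral_add_right_eq_self _ t, mul_comm, ← aux_gh,
    ← integral_const_mul, ofReal_integral_eq_lintegral_ofReal, ← lintegral_indicator measurableSet_Ioi]
  · refine lintegral_mono fun x => ?_
    by_cases hx : 0 < x
    · rw [Set.indicator_of_mem (by simpa using hx), Set.indicator_of_mem (by simpa using hx), ← exp_add]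
      refine ENNReal.ofReal_le_ofReal (exp_le_exp.2 ?_)
      nlinarith [mul_pos hx ht]
    · rw [Set.indicator_of_notMem (by simpa using hx)]
      exact zero_le
  · exact (aux_gi.const_mul _).integrableOn
  · exact Filter.Eventually.of_forall fun t => by positivity

lemma aux_abs : Integrable (fun x : ℝ => |x| * exp (-x ^ 2 / 2)) ∧
    ∫ x : ℝ, |x| * exp (-x ^ 2 / 2) = 2 := by
  obtain ⟨h, h'⟩ := aux_w1 0 le_rfl
  have e : (fun x : ℝ => |x| * exp (-x ^ 2 / 2)) = fun x => (fun y => y * exp (-y ^ 2 / 2)) |x| := by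
    funext x; simp
  refine ⟨?_, ?_⟩
  · have := (integrable_mul_exp_neg_mul_sq (b := 1 / 2) (by norm_num)).abs
    refine this.congr (Filter.Eventually.of_forall fun x => ?_)
    simp only [abs_mul, abs_of_pos (exp_pos _)]
    congr 2; ring
  · rw [e, integral_comp_abs (f := fun y => y * exp (-y ^ 2 / 2)), h']; simp

lemma aux_AC (p p' : ℝ → ℝ) (hp' : Integrable p') (hFTC : ∀ a b : ℝ, p b - p a = ∫ x in a..b, p' x) (x : ℝ) :
    p x * exp (x ^ 2 / 2) - p 0 * exp (0 ^ 2 / 2) = ∫ t in (0:ℝ)..x, (p' t + t * p t) * exp (t ^ 2 / 2) := by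
  have hp : p = fun x => p 0 + ∫ t in (0:ℝ)..x, p' t := by
    funext x; linarith [hFTC 0 x]
  have hac : AbsolutelyContinuousOnInterval (fun x => p 0 + ∫ t in (0:ℝ)..x, p' t) 0 x := by
    refine AbsolutelyContinuousOnInterval.fun_add ?_ ?_
    · exact (contDiff_const.contDiffOn).absolutelyContinuousOnInterval
    · exact (hp'.intervalIntegrable).absolutelyContinuousOnInterval_intervalIntegral (by simp)
  rw [← hp] at hac
  have hac2 : AbsolutelyContinuousOnInterval (fun x => p x * exp (x ^ 2 / 2)) 0 x := by
    refine hac.fun_mul (ContDiffOn.absolutelyContinuousOnInterval ?_)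
    exact (by fun_prop : ContDiff ℝ 1 fun x : ℝ => exp (x ^ 2 / 2)).contDiffOn
  rw [← hac2.integral_deriv_eq_sub]
  refine intervalIntegral.integral_congr_ae ?_
  filter_upwards [LocallyIntegrable.ae_hasDerivAt_integral hp'.locallyIntegrable] with t ht _
  have h1 : HasDerivAt p (p' t) t := by
    rw [hp]; exact (ht 0).const_add _
  have h2 : HasDerivAt (fun x : ℝ => exp (x ^ 2 / 2)) (exp (t ^ 2 / 2) * t) t := by
    have := ((hasDerivAt_pow 2 t).div_const 2).exp
    convert this using 2; simp
  rw [(h1.fun_mul h2).deriv]; ring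

/-- If `X` has mean zero, variance one and density `p` with finite Fisher information,
then the total variation of `p - φ` satisfies `∫ |p' - φ'| ≤ 4 √(I(X‖Z))`, where
`φ(x) = e^{-x²/2}/√(2π)` is the standard normal density (so `φ'(x) = -x φ(x)`) and
`I(X‖Z) = ∫_{p>0} (p'/p + x)² p dx` is the relative Fisher information. -/
theorem tv_dist_le_four_sqrt_relative_fisher
    (p p' : ℝ → ℝ) (J : ℝ)
    (hnn : ∀ x, 0 ≤ p x) (hint : Integrable p) (h1 : ∫ x, p x = 1)
    (hFTC : ∀ a b : ℝ, p b - p a = ∫ x in a..b, p' x)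
    (hconv : ∀ x, p x = 0 → p' x = 0)
    (hmean : ∫ x, x * p x = 0) (hmean_int : Integrable (fun x => x * p x))
    (hvar : ∫ x, x ^ 2 * p x = 1) (hvar_int : Integrable (fun x => x ^ 2 * p x))
    (hIfin : IntegrableOn (fun x => (p' x) ^ 2 / p x) {x | 0 < p x})
    (hJfin : IntegrableOn (fun x => (p' x / p x + x) ^ 2 * p x) {x | 0 < p x})
    (hJ : J = ∫ x in {x | 0 < p x}, (p' x / p x + x) ^ 2 * p x) :
    ∫ x, |p' x + x * (Real.exp (-x ^ 2 / 2) / Real.sqrt (2 * π))| ≤ 4 * Real.sqrt J := by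
  classical
  set S : Set ℝ := {x | 0 < p x} with hS
  -- integrability of the derivative
  have hpm : AEMeasurable p := hint.aestronglyMeasurable.aemeasurable
  have hSn : NullMeasurableSet S := nullMeasurableSet_lt aemeasurable_const hpm
  have hz : ∀ x, x ∉ S → p x = 0 := fun x hx => le_antisymm (not_lt.1 hx) (hnn x)
  have hSae : ∀ P : ℝ → Prop, (∀ x ∈ S, P x) → ∀ᵐ x ∂(volume.restrict S), P x := fun P hP =>
    (ae_restrict_iff'₀ hSn).2 (Filter.Eventually.of_forall hP)
  have hp'm : AEStronglyMeasurable p' (volume.restrict S) := by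
    have h0 : AEMeasurable (fun x => ((p' x / p x + x) ^ 2 * p x - (p' x) ^ 2 / p x - x ^ 2 * p x) / (2 * x))
        (volume.restrict S) :=
      ((hJfin.aestronglyMeasurable.aemeasurable.sub hIfin.aestronglyMeasurable.aemeasurable).sub
        hvar_int.aestronglyMeasurable.aemeasurable.restrict).div (by fun_prop)
    refine (h0.congr ?_).aestronglyMeasurable
    have hne : ∀ᵐ x ∂(volume.restrict S), x ≠ (0:ℝ) := ae_restrict_of_ae (by simp [ae_iff, measure_singleton])
    filter_upwards [hne, hSae (fun x => 0 < p x) (fun x hx => hx)] with x hx hxS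
    have : p x ≠ 0 := ne_of_gt hxS
    field_simp
    ring
  have hp'S : IntegrableOn p' S := by
    refine Integrable.mono' (hIfin.add hint.integrableOn) hp'm (hSae _ fun x hx => ?_)
    have hx : 0 < p x := hx
    have h2 : (p' x) ^ 2 / p x * p x = (p' x) ^ 2 := by field_simp
    have h3 : 0 ≤ (p' x) ^ 2 / p x := by positivity
    simp only [Pi.add_apply, Real.norm_eq_abs]
    refine abs_le_of_sq_le_sq ?_ (by positivity)
    nlinarith
  have hp' : Integrable p' := by
    refine (integrableOn_iff_integrable_of_support_subset ?_).1 hp'S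
    intro x hx
    by_contra h
    exact hx (hconv x (hz x h))
  have hpc : Continuous p := by
    have : p = fun x => p 0 + ∫ t in (0:ℝ)..x, p' t := by
      funext x; linarith [hFTC 0 x]
    rw [this]
    exact continuous_const.add (intervalIntegral.continuous_primitive (fun _ _ => hp'.intervalIntegrable) 0)
  set g : ℝ → ℝ := fun t => p' t + t * p t with hg
  have hgi : Integrable g := hp'.add hmean_int
  -- Cauchy-Schwarz
  set M := ∫ t, |g t| with hM
  have hM0 : 0 ≤ M := integral_nonneg fun _ => abs_nonneg _
  have hMJ : M ≤ √J := by
    refine Real.le_sqrt_of_sq_le ?_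
    have e1 : ∫ t in S, |g t| = M := by
      refine setIntegral_eq_integral_of_forall_compl_eq_zero fun x hx => ?_
      simp [hg, hz x hx, hconv x (hz x hx)]
    have e2 : ∫ t in S, p t = 1 := by
      rw [← h1]
      exact setIntegral_eq_integral_of_forall_compl_eq_zero fun x hx => hz x hx
    have e3 : ∫ t in S, 2 * M * |g t| ≤ ∫ t in S, ((p' t / p t + t) ^ 2 * p t + M ^ 2 * p t) := by
      refine integral_mono_ae (hgi.abs.const_mul _).integrableOn
        (hJfin.add (hint.const_mul _).integrableOn) (hSae _ fun x hx => ?_)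
      have hx : 0 < p x := hx
      have : g x = (p' x / p x + x) * p x := by simp only [hg]; field_simp
      simp only [this, abs_mul, abs_of_pos hx]
      rw [← sq_abs (p' x / p x + x)]
      nlinarith [mul_nonneg hx.le (sq_nonneg (|p' x / p x + x| - M))]
    rw [integral_const_mul, integral_add hJfin (hint.const_mul _).integrableOn, integral_const_mul, e1, e2, ← hJ] at e3
    nlinarith
  -- the ratio
  set r : ℝ → ℝ := fun x => p x * exp (x ^ 2 / 2) with hr
  have hrc : Continuous r := by fun_prop
  have hrg : ∀ x, r x - r 0 = ∫ t in (0:ℝ)..x, g t * exp (t ^ 2 / 2) := aux_AC p p' hp' hFTC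
  obtain ⟨i1, b1⟩ := aux_full r g (fun x => |x| * exp (-x ^ 2 / 2)) 1 zero_le_one hrc hgi hrg (by fun_prop)
    (fun x _ => by positivity) (fun x => by simp) (fun t ht => by
      obtain ⟨h, h'⟩ := aux_w1 t ht.le
      rw [one_mul, ← h', ofReal_integral_eq_lintegral_ofReal h]
      · refine (setLIntegral_congr_fun measurableSet_Ioi fun x hx => ?_).le
        simp only [abs_of_pos (ht.trans hx)]
      · exact (ae_restrict_iff' measurableSet_Ioi).2 (Filter.Eventually.of_forall fun x hx =>
          mul_nonneg (ht.le.trans (le_of_lt hx)) (exp_pos _).le))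
  obtain ⟨i2, b2⟩ := aux_full r g (fun x => exp (-x ^ 2 / 2)) (√(2 * π) / 2) (by positivity) hrc hgi hrg
    (by fun_prop) (fun x _ => by positivity) (fun x => by simp) aux_w2
  obtain ⟨i3, b3⟩ := aux_abs
  have hs : 0 < √(2 * π) := by positivity
  have her : ∀ x, exp (-x ^ 2 / 2) * r x = p x := fun x => by
    have : exp (x ^ 2 / 2) * exp (-x ^ 2 / 2) = 1 := by
      rw [← exp_add, ← exp_zero]; congr 1; ring
    simp only [hr]; linear_combination p x * this
  have hr0 : |r 0 - 1 / √(2 * π)| * 2 ≤ M := by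
    have h4 : 1 - r 0 * √(2 * π) = ∫ x, exp (-x ^ 2 / 2) * (r x - r 0) := by
      rw [← h1, ← aux_gv, ← integral_const_mul, ← integral_sub hint (aux_gi.const_mul _)]
      congr 1; funext x; rw [← her x]; ring
    have h5 : |1 - r 0 * √(2 * π)| ≤ √(2 * π) / 2 * M := by
      rw [h4]
      refine (abs_integral_le_integral_abs).trans (le_trans (le_of_eq ?_) b2)
      congr 1; funext x; rw [abs_mul, abs_of_pos (exp_pos _)]
    have h6 : |1 - r 0 * √(2 * π)| = |r 0 - 1 / √(2 * π)| * √(2 * π) := by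
      rw [← abs_of_pos hs, ← abs_mul, abs_of_pos hs, abs_sub_comm]; congr 1; field_simp
    rw [h6] at h5
    nlinarith
  calc ∫ x, |p' x + x * (Real.exp (-x ^ 2 / 2) / Real.sqrt (2 * π))|
      ≤ ∫ x, (|g x| + |x| * exp (-x ^ 2 / 2) * |r x - r 0| + |r 0 - 1 / √(2 * π)| * (|x| * exp (-x ^ 2 / 2))) := by
        refine integral_mono_of_nonneg (Filter.Eventually.of_forall fun _ => abs_nonneg _)
          ((hgi.abs.add i1).add (i3.const_mul _)) (Filter.Eventually.of_forall fun x => ?_)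
        have : p' x + x * (Real.exp (-x ^ 2 / 2) / Real.sqrt (2 * π)) =
          g x + -(x * exp (-x ^ 2 / 2) * (r x - r 0)) + -((r 0 - 1 / √(2 * π)) * (x * exp (-x ^ 2 / 2))) := by
          simp only [hg]; linear_combination (x) * her x
        simp only [this]
        refine (abs_add_three _ _ _).trans (le_of_eq ?_)
        simp only [abs_neg, abs_mul, abs_of_pos (exp_pos _)]
    _ = M + (∫ x, |x| * exp (-x ^ 2 / 2) * |r x - r 0|) + |r 0 - 1 / √(2 * π)| * 2 := by
        have i12 : Integrable (fun x => |g x| + |x| * exp (-x ^ 2 / 2) * |r x - r 0|) := hgi.abs.add i1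
        rw [integral_add i12 (i3.const_mul _), integral_add hgi.abs i1, integral_const_mul, b3]
    _ ≤ 4 * √J := by linarith
end

section
/- Any probability density p on ℝ of bounded total variation can be represented as a convex mixture of uniform densities on intervals, p(x) = ∫ q(x) dπ(q) a.e., with a mixing probability measure π on the set of uniform densities satisfying ‖p‖_TV = ∫ ‖q‖_TV dπ(q). -/
open MeasureTheory

open scoped ENNReal

/-- `p` is (a.e.) a superposition of indicators of open intervals, with total mass `m`. -/
def Good (p : ℝ → ℝ) (m : ℝ≥0∞) : Prop :=
  ∃ ν : Measure (ℝ × ℝ), ν Set.univ = m ∧ (∀ᵐ ab ∂ν, ab.1 < ab.2) ∧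
    ∀ᵐ x ∂(volume : Measure ℝ), ENNReal.ofReal (p x) = ν {ab | ab.1 < x ∧ x < ab.2}

lemma measSet (x : ℝ) : MeasurableSet {ab : ℝ × ℝ | ab.1 < x ∧ x < ab.2} :=
  (measurableSet_lt measurable_fst measurable_const).inter
    (measurableSet_lt measurable_const measurable_snd)

lemma good_double {p : ℝ → ℝ} {m : ℝ≥0∞} (hm : m ≠ ⊤) (h : Good p m) : Good p (2 * m) := by
  obtain ⟨ν, h0, h1, h2⟩ := h
  have : IsFiniteMeasure ν := ⟨by rw [h0]; exact hm.lt_top⟩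
  have mf1 : Measurable (fun ab : ℝ × ℝ => (ab.1, (ab.1 + ab.2) / 2)) := by fun_prop
  have mf2 : Measurable (fun ab : ℝ × ℝ => ((ab.1 + ab.2) / 2, ab.2)) := by fun_prop
  refine ⟨ν.map (fun ab => (ab.1, (ab.1 + ab.2) / 2)) + ν.map (fun ab => ((ab.1 + ab.2) / 2, ab.2)),
    ?_, ?_, ?_⟩
  · rw [Measure.add_apply, Measure.map_apply mf1 .univ, Measure.map_apply mf2 .univ]
    simp [h0, two_mul]
  · rw [ae_add_measure_iff]
    constructor
    · rw [ae_map_iff mf1.aemeasurable (measurableSet_lt measurable_fst measurable_snd)]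
      filter_upwards [h1] with ab hab
      linarith
    · rw [ae_map_iff mf2.aemeasurable (measurableSet_lt measurable_fst measurable_snd)]
      filter_upwards [h1] with ab hab
      linarith
  · have hd : ∀ᵐ x ∂(volume : Measure ℝ), ∀ᵐ ab ∂ν, (ab.1 + ab.2) / 2 ≠ x := by
      have hms : MeasurableSet {z : ℝ × (ℝ × ℝ) | (z.2.1 + z.2.2) / 2 ≠ z.1} :=
        (measurableSet_eq_fun (by fun_prop) (by fun_prop)).compl
      rw [Measure.ae_ae_comm (p := fun (x : ℝ) (ab : ℝ × ℝ) => (ab.1 + ab.2) / 2 ≠ x) hms]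
      refine ae_of_all _ fun ab => ?_
      simp [ae_iff]
    filter_upwards [h2, hd] with x hx hdx
    rw [hx, Measure.add_apply, Measure.map_apply mf1 (measSet x), Measure.map_apply mf2 (measSet x),
      ← measure_union _ (mf2 (measSet x))]
    · apply measure_congr
      filter_upwards [h1, hdx] with ab hab hne
      apply propext
      show (ab.1 < x ∧ x < ab.2) ↔ ((ab.1 < x ∧ x < (ab.1 + ab.2) / 2) ∨
        ((ab.1 + ab.2) / 2 < x ∧ x < ab.2))
      constructor
      · rintro ⟨ha, hb⟩
        rcases lt_or_gt_of_ne hne with h | h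
        · exact Or.inr ⟨h, hb⟩
        · exact Or.inl ⟨ha, h⟩
      · rintro (⟨ha, hb⟩ | ⟨ha, hb⟩)
        · exact ⟨ha, by linarith⟩
        · exact ⟨by linarith, hb⟩
    · rw [Set.disjoint_left]
      rintro ab ⟨_, h⟩ ⟨h', _⟩
      simp only at h h'
      linarith

lemma good_pow {p : ℝ → ℝ} {m : ℝ≥0∞} (hm : m ≠ ⊤) (h : Good p m) (n : ℕ) :
    Good p (2 ^ n * m) := by
  induction n with
  | zero => simpa using h
  | succ n ih =>
    have := good_double (ENNReal.mul_ne_top (by simp) hm) ih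
    rwa [pow_succ', mul_assoc]

lemma good_convex {p : ℝ → ℝ} {m m' s t : ℝ≥0∞} (hst : s + t = 1)
    (h : Good p m) (h' : Good p m') : Good p (s * m + t * m') := by
  obtain ⟨ν, h0, h1, h2⟩ := h
  obtain ⟨ν', h0', h1', h2'⟩ := h'
  refine ⟨s • ν + t • ν', ?_, ?_, ?_⟩
  · simp [h0, h0']
  · rw [ae_add_measure_iff]
    exact ⟨Measure.ae_smul_measure h1 _, Measure.ae_smul_measure h1' _⟩
  · filter_upwards [h2, h2'] with x hx hx'
    simp only [Measure.add_apply, Measure.smul_apply, smul_eq_mul]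
    rw [← hx, ← hx', ← add_mul, hst, one_mul]

lemma good_ge {p : ℝ → ℝ} {m w : ℝ} (hm : 0 < m) (hw : m ≤ w)
    (h : Good p (ENNReal.ofReal m)) : Good p (ENNReal.ofReal w) := by
  obtain ⟨n, hn⟩ := pow_unbounded_of_one_lt (w / m) (one_lt_two)
  have hn' : w < 2 ^ n * m := (div_lt_iff₀ hm).1 hn
  have hp := good_pow ENNReal.ofReal_ne_top h n
  have hd : 0 < 2 ^ n * m - m := by linarith
  set t := (w - m) / (2 ^ n * m - m) with ht
  have ht0 : 0 ≤ t := div_nonneg (by linarith) hd.le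
  have ht1 : t ≤ 1 := (div_le_one hd).2 (by linarith)
  have hc := good_convex (s := ENNReal.ofReal (1 - t)) (t := ENNReal.ofReal t)
    (by rw [← ENNReal.ofReal_add (by linarith) ht0]; simp) h hp
  convert hc using 1
  have e2 : (2 : ℝ≥0∞) ^ n = ENNReal.ofReal (2 ^ n) := by
    rw [ENNReal.ofReal_pow (by norm_num)]; simp
  rw [e2, ← ENNReal.ofReal_mul (p := 2 ^ n) (by positivity), ← ENNReal.ofReal_mul ht0,
    ← ENNReal.ofReal_mul (p := 1 - t) (by linarith), ← ENNReal.ofReal_add (mul_nonneg (by linarith) hm.le)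
    (by positivity)]
  congr 1
  have : t * (2 ^ n * m - m) = w - m := div_mul_cancel₀ _ hd.ne'
  linarith

lemma exists_small {p : ℝ → ℝ} (hint : Integrable p) {ε : ℝ} (hε : 0 < ε) {S : Set ℝ}
    (hS : volume S = ⊤) : ∃ x ∈ S, p x < ε := by
  by_contra! hcon
  have := hint.measure_ge_lt_top hε
  have h2 : volume S ≤ volume {a | ε ≤ p a} := measure_mono hcon
  rw [hS] at h2
  exact absurd (h2.trans_lt this) (lt_irrefl _)

lemma good_base {p : ℝ → ℝ} (hnn : ∀ x, 0 ≤ p x) (hint : Integrable p)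
    (hTV : eVariationOn p Set.univ ≠ ⊤) :
    ∃ m, Good p m ∧ m ≤ ENNReal.ofReal ((eVariationOn p Set.univ).toReal / 2) := by
  set v : ℝ → ℝ := fun x => (eVariationOn p (Set.Iic x)).toReal with hv
  have hfin : ∀ x, eVariationOn p (Set.Iic x) ≠ ⊤ := fun x =>
    ne_top_of_le_ne_top hTV (eVariationOn.mono p (Set.subset_univ _))
  have v0 : ∀ x, 0 ≤ v x := fun x => ENNReal.toReal_nonneg
  have v1 : ∀ x, v x ≤ (eVariationOn p Set.univ).toReal := fun x =>
    ENNReal.toReal_mono hTV (eVariationOn.mono p (Set.subset_univ _))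
  have v2 : ∀ x y, x ≤ y → |p y - p x| ≤ v y - v x := by
    intro x y hxy
    have h1 : eVariationOn p (Set.Iic x) + eVariationOn p (Set.Icc x y) ≤
        eVariationOn p (Set.Iic y) := by
      refine (eVariationOn.add_le_union p ?_).trans (eVariationOn.mono p ?_)
      · intro a ha b hb; exact le_trans ha hb.1
      · rintro a (ha | ha)
        · exact le_trans ha hxy
        · exact ha.2
    have h2 : edist (p y) (p x) ≤ eVariationOn p (Set.Icc x y) :=
      eVariationOn.edist_le p ⟨hxy, le_rfl⟩ ⟨le_rfl, hxy⟩
    have h3 := ENNReal.toReal_mono (hfin y) ((add_le_add_right h2 _).trans h1)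
    rw [ENNReal.toReal_add (hfin x) (edist_ne_top _ _), edist_dist,
      ENNReal.toReal_ofReal dist_nonneg, Real.dist_eq] at h3
    simp only [hv]; linarith
  set f : ℝ → ℝ := fun x => (v x + p x) / 2 with hf
  set g : ℝ → ℝ := fun x => (v x - p x) / 2 with hg
  have fm : Monotone f := by
    intro x y hxy
    have := abs_le.1 (v2 x y hxy)
    simp only [hf]; linarith [this.1]
  have gm : Monotone g := by
    intro x y hxy
    have := abs_le.1 (v2 x y hxy)
    simp only [hg]; linarith [this.2]
  have vm : Monotone v := by
    intro x y hxy
    have := (abs_nonneg _).trans (v2 x y hxy)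
    linarith
  have bb : BddBelow (Set.range v) := ⟨0, by rintro _ ⟨x, rfl⟩; exact v0 x⟩
  have ba : BddAbove (Set.range v) := ⟨_, by rintro _ ⟨x, rfl⟩; exact v1 x⟩
  set lo := (⨅ x, v x) / 2 with hlo
  set hi := (⨆ x, v x) / 2 with hhi
  have lo_le : ∀ x, lo ≤ v x / 2 := fun x => by
    have := ciInf_le bb x
    simp only [hlo]; linarith
  have le_hi : ∀ x, v x / 2 ≤ hi := fun x => by
    have := le_ciSup ba x
    simp only [hhi]; linarith
  have hfg : ∀ x, g x ≤ f x := fun x => by simp only [hf, hg]; linarith [hnn x]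
  have g_lo : ∀ x, lo ≤ g x := fun x => by
    refine le_of_forall_pos_le_add fun ε hε => ?_
    obtain ⟨y, hy, hpy⟩ := exists_small hint hε (S := Set.Iic x) (by simp)
    have a1 := gm hy
    have a2 := lo_le y
    simp only [hg] at *; linarith
  have f_hi : ∀ x, f x ≤ hi := fun x => by
    refine le_of_forall_pos_le_add fun ε hε => ?_
    obtain ⟨y, hy, hpy⟩ := exists_small hint hε (S := Set.Ici x) (by simp)
    have a1 := fm hy
    have a2 := le_hi y
    simp only [hf] at *; linarith
  have ex_g : ∀ u, u < hi → ∃ x, u < g x := by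
    intro u hu
    have : 2 * u < ⨆ x, v x := by simp only [hhi] at hu; linarith
    obtain ⟨x, hx⟩ := exists_lt_of_lt_ciSup this
    obtain ⟨y, hy, hpy⟩ := exists_small hint (ε := v x - 2 * u) (by linarith)
      (S := Set.Ici x) (by simp)
    refine ⟨y, ?_⟩
    have := vm hy
    simp only [hg]; linarith
  have ex_f : ∀ u, lo < u → ∃ x, f x < u := by
    intro u hu
    have : (⨅ x, v x) < 2 * u := by simp only [hlo] at hu; linarith
    obtain ⟨x, hx⟩ := exists_lt_of_ciInf_lt this
    obtain ⟨y, hy, hpy⟩ := exists_small hint (ε := 2 * u - v x) (by linarith)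
      (S := Set.Iic x) (by simp)
    refine ⟨y, ?_⟩
    have := vm hy
    simp only [hf]; linarith
  set U := Set.Ioo lo hi with hU
  have nf : ∀ u ∈ U, {x | u < f x}.Nonempty := fun u hu => by
    obtain ⟨x, hx⟩ := ex_g u hu.2
    exact ⟨x, hx.trans_le (hfg x)⟩
  have ng : ∀ u ∈ U, {x | u < g x}.Nonempty := fun u hu => ex_g u hu.2
  have bf : ∀ u ∈ U, BddBelow {x | u < f x} := fun u hu => by
    obtain ⟨x, hx⟩ := ex_f u hu.1
    refine ⟨x, fun y hy => ?_⟩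
    by_contra! hlt
    have := fm hlt.le
    simp only [Set.mem_ofPred_eq] at hy
    linarith
  have bg : ∀ u ∈ U, BddBelow {x | u < g x} := fun u hu =>
    (bf u hu).mono fun x hx => lt_of_lt_of_le hx (hfg x)
  set A : ℝ → ℝ := fun u => sInf {x | u < f x} with hA
  set B : ℝ → ℝ := fun u => sInf {x | u < g x} with hB
  have mA : MonotoneOn A U := fun u hu w hw huw =>
    csInf_le_csInf (bf u hu) (nf w hw) fun x hx => lt_of_le_of_lt huw hx
  have mB : MonotoneOn B U := fun u hu w hw huw =>
    csInf_le_csInf (bg u hu) (ng w hw) fun x hx => lt_of_le_of_lt huw hx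
  have aA : AEMeasurable A (volume.restrict U) :=
    aemeasurable_restrict_of_monotoneOn measurableSet_Ioo mA
  have aB : AEMeasurable B (volume.restrict U) :=
    aemeasurable_restrict_of_monotoneOn measurableSet_Ioo mB
  have aAB : AEMeasurable (fun u => (A u, B u)) (volume.restrict U) := aA.prodMk aB
  have mlt : MeasurableSet {ab : ℝ × ℝ | ab.1 < ab.2} :=
    measurableSet_lt measurable_fst measurable_snd
  refine ⟨_, ⟨((volume.restrict U).map (fun u => (A u, B u))).restrict {ab | ab.1 < ab.2},
    rfl, ?_, ?_⟩, ?_⟩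
  · exact ae_restrict_mem mlt
  · have c1 : ∀ᵐ x ∂(volume : Measure ℝ), ContinuousAt f x := by
      rw [ae_iff]; exact fm.countable_not_continuousAt.measure_zero _
    have c2 : ∀ᵐ x ∂(volume : Measure ℝ), ContinuousAt g x := by
      rw [ae_iff]; exact gm.countable_not_continuousAt.measure_zero _
    filter_upwards [c1, c2] with x hcf hcg
    rw [Measure.restrict_apply (measSet x), Measure.map_apply_of_aemeasurable aAB
      ((measSet x).inter mlt)]
    have hvol : volume (Set.Ioo (g x) (f x)) = ENNReal.ofReal (p x) := by
      rw [Real.volume_Ioo]; congr 1; simp only [hf, hg]; ring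
    have hsub : Set.Ioo (g x) (f x) ⊆ U := Set.Ioo_subset_Ioo (g_lo x) (f_hi x)
    rw [← hvol, ← Measure.restrict_eq_self volume hsub]
    apply measure_congr
    have hne : ∀ᵐ u ∂(volume.restrict U), u ≠ g x := ae_restrict_of_ae (by simp [ae_iff])
    filter_upwards [ae_restrict_mem measurableSet_Ioo, hne] with u hu hug
    apply propext
    show (g x < u ∧ u < f x) ↔ ((A u < x ∧ x < B u) ∧ A u < B u)
    constructor
    · rintro ⟨h1, h2⟩
      have hAx : A u < x := by
        have : ∀ᶠ y in nhds x, u < f y := hcf.eventually (lt_mem_nhds h2)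
        obtain ⟨y, hy, hyx⟩ := ((this.filter_mono nhdsWithin_le_nhds).and
          (self_mem_nhdsWithin : Set.Iio x ∈ nhdsWithin x (Set.Iio x))).exists
        exact (csInf_le (bf u hu) hy).trans_lt hyx
      have hBx : x < B u := by
        have : ∀ᶠ y in nhds x, g y < u := hcg.eventually (gt_mem_nhds h1)
        obtain ⟨y, hy, hyx⟩ := ((this.filter_mono nhdsWithin_le_nhds).and
          (self_mem_nhdsWithin : Set.Ioi x ∈ nhdsWithin x (Set.Ioi x))).exists
        refine lt_of_lt_of_le hyx (le_csInf (ng u hu) fun z hz => ?_)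
        by_contra! hlt
        have := gm hlt.le
        simp only [Set.mem_ofPred_eq] at hz
        linarith
      exact ⟨⟨hAx, hBx⟩, hAx.trans hBx⟩
    · rintro ⟨⟨h1, h2⟩, _⟩
      constructor
      · refine lt_of_le_of_ne ?_ hug.symm
        by_contra! hlt
        exact absurd (csInf_le (bg u hu) hlt) (not_le.2 h2)
      · obtain ⟨y, hy, hyx⟩ := exists_lt_of_csInf_lt (nf u hu) h1
        exact lt_of_lt_of_le hy (fm hyx.le)
  · refine (Measure.restrict_apply_le _ _).trans ?_
    rw [Measure.map_apply_of_aemeasurable aAB .univ, Set.preimage_univ,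
      Measure.restrict_apply_univ, hU, Real.volume_Ioo]
    apply ENNReal.ofReal_le_ofReal
    have h1 : (⨆ x, v x) ≤ (eVariationOn p Set.univ).toReal := ciSup_le v1
    have h2 : 0 ≤ ⨅ x, v x := le_ciInf v0
    simp only [hlo, hhi]; linarith

/-- Any probability density `p` on `ℝ` of bounded total variation can be represented as a
convex mixture of uniform densities on intervals: there is a mixing probability measure `mix`
on pairs `(a,b)` with `a < b` such that `p(x) = ∫ q_{a,b}(x) d mix(a,b)` a.e., where
`q_{a,b} = (b-a)⁻¹ 1_{(a,b)}`, and moreover `‖p‖_TV = ∫ ‖q_{a,b}‖_TV d mix = ∫ 2/(b-a) d mix`. -/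
theorem density_mixture_of_uniforms
    (p : ℝ → ℝ)
    (hnn : ∀ x, 0 ≤ p x) (hint : Integrable p) (h1 : ∫ x, p x = 1)
    (hTV : eVariationOn p Set.univ ≠ ⊤) :
    ∃ mix : Measure (ℝ × ℝ), IsProbabilityMeasure mix ∧
      (∀ᵐ ab ∂mix, ab.1 < ab.2) ∧
      (∀ᵐ x ∂(volume : Measure ℝ),
        p x = ∫ ab, Set.indicator (Set.Ioo ab.1 ab.2) (fun _ => (ab.2 - ab.1)⁻¹) x ∂mix) ∧
      eVariationOn p Set.univ = ∫⁻ ab, ENNReal.ofReal (2 / (ab.2 - ab.1)) ∂mix := by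
  have hl1 : ∫⁻ x, ENNReal.ofReal (p x) = 1 := by
    rw [← ofReal_integral_eq_lintegral_ofReal hint (ae_of_all _ hnn), h1, ENNReal.ofReal_one]
  set V := (eVariationOn p Set.univ).toReal with hV
  have hgood : Good p (ENNReal.ofReal (V / 2)) := by
    obtain ⟨m, hm, hmV⟩ := good_base hnn hint hTV
    have hmt : m ≠ ⊤ := ne_top_of_le_ne_top ENNReal.ofReal_ne_top hmV
    have hm0 : m ≠ 0 := by
      rintro rfl
      obtain ⟨ν, h0, -, h2⟩ := hm
      rw [Measure.measure_univ_eq_zero] at h0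
      subst h0
      rw [lintegral_congr_ae h2] at hl1
      simp at hl1
    have hmr := ENNReal.ofReal_toReal hmt
    refine good_ge (m := m.toReal) (ENNReal.toReal_pos hm0 hmt) ?_ (by rwa [hmr])
    exact ENNReal.toReal_le_of_le_ofReal (by positivity) hmV
  obtain ⟨ν, h0, hlt, hd⟩ := hgood
  have : IsFiniteMeasure ν := ⟨by rw [h0]; exact ENNReal.ofReal_lt_top⟩
  have md : Measurable (fun ab : ℝ × ℝ => ENNReal.ofReal (ab.2 - ab.1)) := by fun_prop
  have hac := withDensity_absolutelyContinuous ν (fun ab : ℝ × ℝ => ENNReal.ofReal (ab.2 - ab.1))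
  have mind : ∀ x : ℝ, Measurable (fun ab : ℝ × ℝ =>
      Set.indicator (Set.Ioo ab.1 ab.2) (fun _ => (ab.2 - ab.1)⁻¹) x) := by
    intro x
    have : (fun ab : ℝ × ℝ => Set.indicator (Set.Ioo ab.1 ab.2) (fun _ => (ab.2 - ab.1)⁻¹) x)
        = Set.indicator {ab : ℝ × ℝ | ab.1 < x ∧ x < ab.2} (fun ab => (ab.2 - ab.1)⁻¹) := by
      ext ab; simp [Set.indicator]
    rw [this]
    exact Measurable.indicator (by fun_prop) (measSet x)
  refine ⟨ν.withDensity (fun ab => ENNReal.ofReal (ab.2 - ab.1)), ⟨?_⟩, hac.ae_le hlt, ?_, ?_⟩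
  · rw [withDensity_apply _ .univ, Measure.restrict_univ, ← hl1, lintegral_congr_ae hd]
    have hmsT : MeasurableSet {z : ℝ × (ℝ × ℝ) | z.2.1 < z.1 ∧ z.1 < z.2.2} :=
      (measurableSet_lt measurable_snd.fst measurable_fst).inter
        (measurableSet_lt measurable_fst measurable_snd.snd)
    have e1 := Measure.prod_apply (μ := (volume : Measure ℝ)) (ν := ν) hmsT
    have e2 := Measure.prod_apply_symm (μ := (volume : Measure ℝ)) (ν := ν) hmsT
    rw [e1] at e2
    refine Eq.trans ?_ e2.symm
    refine lintegral_congr fun ab => ?_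
    rw [← Real.volume_Ioo]
    rfl
  · filter_upwards [hd] with x hx
    rw [integral_eq_lintegral_of_nonneg_ae _ (mind x).aestronglyMeasurable]
    · rw [lintegral_withDensity_eq_lintegral_mul _ md (mind x).ennreal_ofReal]
      have : ∫⁻ ab, ((fun ab : ℝ × ℝ => ENNReal.ofReal (ab.2 - ab.1)) * fun ab : ℝ × ℝ =>
          ENNReal.ofReal (Set.indicator (Set.Ioo ab.1 ab.2) (fun _ => (ab.2 - ab.1)⁻¹) x)) ab ∂ν
          = ENNReal.ofReal (p x) := by
        rw [hx, ← lintegral_indicator_one (measSet x)]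
        refine lintegral_congr fun ab => ?_
        simp only [Pi.mul_apply]
        by_cases h : ab.1 < x ∧ x < ab.2
        · have hpos : 0 < ab.2 - ab.1 := by linarith [h.1, h.2]
          rw [Set.indicator_of_mem (show x ∈ Set.Ioo ab.1 ab.2 from h),
            Set.indicator_of_mem (show ab ∈ {ab : ℝ × ℝ | ab.1 < x ∧ x < ab.2} from h),
            ← ENNReal.ofReal_mul hpos.le, mul_inv_cancel₀ hpos.ne']
          simp
        · rw [Set.indicator_of_notMem (show x ∉ Set.Ioo ab.1 ab.2 from h),
            Set.indicator_of_notMem (show ab ∉ {ab : ℝ × ℝ | ab.1 < x ∧ x < ab.2} from h)]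
          simp
      rw [this, ENNReal.toReal_ofReal (hnn x)]
    · refine ae_of_all _ fun ab => ?_
      refine Set.indicator_apply_nonneg fun h => ?_
      exact inv_nonneg.2 (by linarith [h.1, h.2])
  · rw [lintegral_withDensity_eq_lintegral_mul _ md (by fun_prop)]
    have : ∫⁻ ab, ((fun ab : ℝ × ℝ => ENNReal.ofReal (ab.2 - ab.1)) * fun ab : ℝ × ℝ =>
          ENNReal.ofReal (2 / (ab.2 - ab.1))) ab ∂ν = ∫⁻ ab, 2 ∂ν := by
      refine lintegral_congr_ae ?_
      filter_upwards [hlt] with ab hab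
      have hpos : 0 < ab.2 - ab.1 := by linarith
      simp only [Pi.mul_apply]
      rw [← ENNReal.ofReal_mul hpos.le, mul_div_cancel₀ _ hpos.ne']
      simp
    rw [this, lintegral_const, h0, ← ENNReal.ofReal_toReal hTV]
    rw [show (2 : ℝ≥0∞) = ENNReal.ofReal 2 by simp, ← ENNReal.ofReal_mul (by norm_num)]
    congr 1
    simp only [hV]; ring
end

section
/- Let X have finite second moment and characteristic function f such that ∫ |t|(|f(t)| + |f'(t)| + |f''(t)|) dt < ∞. Then X has a continuously differentiable density p with ∫ |p'(x)| dx ≤ (1/2) ∫ (|t f''(t)| + 2|f'(t)| + |t f(t)|) dt. -/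
open MeasureTheory Real ProbabilityTheory
open scoped FourierTransform

lemma aux_density (μ : Measure ℝ) [IsProbabilityMeasure μ] (p : ℝ → ℝ) (hp : Continuous p)
    (hpi : Integrable p)
    (h : ∀ t : ℝ, charFun μ t = ∫ x : ℝ, Complex.exp (t * x * Complex.I) * (p x : ℂ)) :
    μ = volume.withDensity (fun x => ENNReal.ofReal (p x)) := by
  set νp := volume.withDensity (fun x => ENNReal.ofReal (p x)) with hνp
  set νn := volume.withDensity (fun x => ENNReal.ofReal (-p x)) with hνn
  have : IsFiniteMeasure νp := isFiniteMeasure_withDensity_ofReal hpi.2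
  have : IsFiniteMeasure νn := isFiniteMeasure_withDensity_ofReal hpi.neg.2
  have hbd : ∀ (t : ℝ) (ν : Measure ℝ) [IsFiniteMeasure ν],
      Integrable (fun x : ℝ => Complex.exp (t * x * Complex.I)) ν := by
    intro t ν _
    refine Integrable.of_bound (by fun_prop) 1 (Filter.Eventually.of_forall fun x => ?_)
    rw [← Complex.ofReal_mul, Complex.norm_exp_ofReal_mul_I]
  have hmul : ∀ (t : ℝ) (q : ℝ → ℝ), Integrable q →
      Integrable (fun x : ℝ => (q x : ℂ) * Complex.exp (t * x * Complex.I)) := by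
    intro t q hq
    refine Integrable.mul_bdd (c := 1) hq.ofReal (by fun_prop) (Filter.Eventually.of_forall fun x => ?_)
    rw [← Complex.ofReal_mul, Complex.norm_exp_ofReal_mul_I]
  have key : μ + νn = νp := by
    apply Measure.ext_of_charFun
    ext t
    have h1 : charFun (μ + νn) t = charFun μ t + charFun νn t := by
      simp only [charFun_apply_real]
      exact integral_add_measure (hbd t μ) (hbd t νn)
    rw [h1, h t]
    simp only [charFun_apply_real]
    rw [hνn, hνp, integral_withDensity_eq_integral_toReal_smul (by fun_prop) (by simp),
      integral_withDensity_eq_integral_toReal_smul (by fun_prop) (by simp)]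
    simp only [ENNReal.toReal_ofReal', Complex.real_smul]
    rw [← integral_add]
    · congr 1
      ext x
      have : (max (p x) 0) - max (-p x) 0 = p x := by
        rcases le_total (p x) 0 with h | h
        · rw [max_eq_right h, max_eq_left (by linarith)]; ring
        · rw [max_eq_left h, max_eq_right (by linarith)]; ring
      have h2 : ((max (p x) 0 : ℝ) : ℂ) - (max (-p x) 0 : ℝ) = p x := by exact_mod_cast this
      rw [← h2]; ring
    · simpa [mul_comm] using hmul t p hpi
    · exact hmul t _ hpi.neg.pos_part
  have hz : νn = 0 := by
    have hms : MeasurableSet {x | p x < 0} := measurableSet_lt hp.measurable measurable_const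
    have e1 : νp {x | p x < 0} = 0 := by
      rw [hνp, withDensity_apply _ hms]
      rw [setLIntegral_congr_fun (g := fun _ => 0) hms]
      · simp
      · intro x hx
        exact ENNReal.ofReal_of_nonpos (le_of_lt hx)
    have e2 : νn {x | p x < 0} = 0 := by
      have : νn {x | p x < 0} ≤ νp {x | p x < 0} := by
        rw [← key]; simp
      exact le_antisymm (this.trans e1.le) zero_le
    have e3 : νn {x | p x < 0}ᶜ = 0 := by
      rw [hνn, withDensity_apply _ hms.compl]
      rw [setLIntegral_congr_fun (g := fun _ => 0) hms.compl]
      · simp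
      · intro x hx
        simp only [Set.mem_compl_iff, Set.mem_ofPred_eq, not_lt] at hx
        exact ENNReal.ofReal_of_nonpos (by linarith)
    rw [← Measure.measure_univ_eq_zero, ← Set.union_compl_self {x | p x < 0}]
    exact measure_union_null e2 e3
  rw [← key, hz, add_zero]

lemma aux_norm (h : ℝ → ℂ) (x : ℝ) : ‖𝓕 h x‖ ≤ ∫ t, ‖h t‖ :=
  VectorFourier.norm_fourierIntegral_le_integral_norm _ _ _ _ _

lemma aux_cont (h : ℝ → ℂ) (hi : Integrable h) : Continuous (𝓕 h) :=
  VectorFourier.fourierIntegral_continuous Real.continuous_fourierChar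
    (by exact continuous_inner) hi

lemma aux_decay (h h' h'' : ℝ → ℂ) (hd : ∀ t, HasDerivAt h (h' t) t)
    (hd' : ∀ t, HasDerivAt h' (h'' t) t) (hi : Integrable h) (hi' : Integrable h')
    (hi'' : Integrable h'') (x : ℝ) :
    ‖𝓕 h (x / (2 * π))‖ ≤ ((∫ t, ‖h t‖) + ∫ t, ‖h'' t‖) * (1 + x ^ 2)⁻¹ := by
  have e : deriv h = h' := funext fun t => (hd t).deriv
  have e' : deriv h' = h'' := funext fun t => (hd' t).deriv
  have a1 := Real.fourier_deriv hi (fun t => (hd t).differentiableAt) (e ▸ hi')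
  have a2 := Real.fourier_deriv hi' (fun t => (hd' t).differentiableAt) (e' ▸ hi'')
  rw [e] at a1
  rw [e'] at a2
  have b := aux_norm h'' (x / (2 * π))
  have b0 := aux_norm h (x / (2 * π))
  rw [a2, a1] at b
  have : ‖(2 * π * Complex.I * (x / (2 * π) : ℝ) : ℂ)‖ = |x| := by
    have : (2 * π * Complex.I * (x / (2 * π) : ℝ) : ℂ) = Complex.I * x := by
      push_cast
      have : (π : ℂ) ≠ 0 := by exact_mod_cast Real.pi_ne_zero
      field_simp
    rw [this]; simp
  simp only [norm_smul] at b
  rw [this, ← mul_assoc, abs_mul_abs_self] at b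
  rw [← div_eq_mul_inv, le_div_iff₀ (by positivity)]
  nlinarith

lemma aux_real (f : ℝ → ℂ) (hf : ∀ t, (starRingEnd ℂ) (f t) = f (-t)) (w : ℝ) :
    (starRingEnd ℂ) (𝓕 f w) = 𝓕 f w := by
  rw [Real.fourier_eq', ← integral_conj, ← integral_neg_eq_self]
  congr 1
  ext t
  simp only [smul_eq_mul, map_mul, ← Complex.exp_conj, hf, neg_neg, Complex.conj_ofReal, Complex.conj_I]
  simp

lemma aux_int (g : ℝ → ℂ) (hg : Continuous g) (h : Integrable (fun t : ℝ => |t| * ‖g t‖)) :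
    Integrable g := by
  have h1 : Integrable (Set.indicator (Set.Icc (-1 : ℝ) 1) g) :=
    (integrable_indicator_iff measurableSet_Icc).2 (hg.continuousOn.integrableOn_compact isCompact_Icc)
  refine (h1.norm.add h).mono' hg.aestronglyMeasurable (Filter.Eventually.of_forall fun t => ?_)
  simp only [Pi.add_apply]
  by_cases ht : t ∈ Set.Icc (-1 : ℝ) 1
  · rw [Set.indicator_of_mem ht]
    have : 0 ≤ |t| * ‖g t‖ := by positivity
    linarith
  · rw [Set.indicator_of_notMem ht]
    have : 1 ≤ |t| := by
      by_contra hc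
      push Not at hc
      exact ht ⟨(abs_lt.1 hc).1.le, (abs_lt.1 hc).2.le⟩
    have := norm_nonneg (g t)
    simp only [norm_zero]
    nlinarith



/-- If `X` has finite second moment and its characteristic function `f` (twice continuously
differentiable, with derivatives `f'`, `f''`) satisfies
`∫ |t| (|f(t)| + |f'(t)| + |f''(t)|) dt < ∞`, then `X` has a continuously differentiable
density `p` with `∫ |p'(x)| dx ≤ ½ ∫ (|t f''(t)| + 2|f'(t)| + |t f(t)|) dt`. -/
theorem density_tv_bound_of_charFun
    {Ω : Type*} [MeasureSpace Ω] [IsProbabilityMeasure (ℙ : Measure Ω)]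
    (X : Ω → ℝ) (hXm : Measurable X)
    (hX2 : Integrable (fun ω => (X ω) ^ 2))
    (f f' f'' : ℝ → ℂ)
    (hf : ∀ t : ℝ, f t = ∫ ω, Complex.exp (Complex.I * t * X ω))
    (hf' : ∀ t : ℝ, HasDerivAt f (f' t) t)
    (hf'' : ∀ t : ℝ, HasDerivAt f' (f'' t) t)
    (hcont : Continuous f'')
    (hint : Integrable (fun t => |t| * (‖f t‖ + ‖f' t‖ + ‖f'' t‖))) :
    ∃ p : ℝ → ℝ, ContDiff ℝ 1 p ∧
      Measure.map X ℙ = volume.withDensity (fun x => ENNReal.ofReal (p x)) ∧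
      ∫ x, |deriv p x| ≤ (1 / 2) * ∫ t, (|t| * ‖f'' t‖ + 2 * ‖f' t‖ + |t| * ‖f t‖) := by
  have hfc : Continuous f := continuous_iff_continuousAt.2 fun t => (hf' t).continuousAt
  have hfc' : Continuous f' := continuous_iff_continuousAt.2 fun t => (hf'' t).continuousAt
  have i0 : Integrable (fun t : ℝ => |t| * ‖f t‖) := by
    refine hint.mono' (by fun_prop) (Filter.Eventually.of_forall fun t => ?_)
    rw [norm_mul, norm_norm, Real.norm_eq_abs, abs_abs]
    gcongr
    have := norm_nonneg (f' t)
    have := norm_nonneg (f'' t)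
    linarith
  have i1 : Integrable (fun t : ℝ => |t| * ‖f' t‖) := by
    refine hint.mono' (by fun_prop) (Filter.Eventually.of_forall fun t => ?_)
    rw [norm_mul, norm_norm, Real.norm_eq_abs, abs_abs]
    gcongr
    have := norm_nonneg (f t)
    have := norm_nonneg (f'' t)
    linarith
  have i2 : Integrable (fun t : ℝ => |t| * ‖f'' t‖) := by
    refine hint.mono' (by fun_prop) (Filter.Eventually.of_forall fun t => ?_)
    rw [norm_mul, norm_norm, Real.norm_eq_abs, abs_abs]
    gcongr
    have := norm_nonneg (f t)
    have := norm_nonneg (f' t)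
    linarith
  have j0 := aux_int f hfc i0
  have j1 := aux_int f' hfc' i1
  have j2 := aux_int f'' hcont i2
  have k : ∀ g : ℝ → ℂ, Continuous g → Integrable (fun t : ℝ => |t| * ‖g t‖) →
      Integrable (fun t : ℝ => (t : ℂ) * g t) := by
    intro g hg hi
    refine hi.mono' (by fun_prop) (Filter.Eventually.of_forall fun t => ?_)
    simp
  have k0 := k f hfc i0
  have k1 := k f' hfc' i1
  have k2 := k f'' hcont i2
  have hpi : (0 : ℝ) < 2 * π := by positivity
  -- the Fourier transform is real
  have hconj : ∀ t, (starRingEnd ℂ) (f t) = f (-t) := by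
    intro t
    rw [hf, hf, ← integral_conj]
    congr 1
    ext ω
    rw [← Complex.exp_conj]
    simp
  have hreal : ∀ w, ((𝓕 f w).re : ℂ) = 𝓕 f w := fun w =>
    Complex.conj_eq_iff_re.1 (aux_real f hconj w)
  -- derivative
  set h : ℝ → ℂ := fun t => (t : ℂ) * f t with hh
  set h' : ℝ → ℂ := fun t => f t + t * f' t with hh'
  set h'' : ℝ → ℂ := fun t => 2 * f' t + t * f'' t with hh''
  have hid : ∀ t : ℝ, HasDerivAt (fun s : ℝ => (s : ℂ)) 1 t := fun t => Complex.ofRealCLM.hasDerivAt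
  have hd : ∀ t, HasDerivAt h (h' t) t := by
    intro t
    convert! (hid t).mul (hf' t) using 1
    simp [hh']
  have hd' : ∀ t, HasDerivAt h' (h'' t) t := by
    intro t
    convert! (hf' t).add ((hid t).mul (hf'' t)) using 1
    simp only [hh'']; ring
  have l1 : Integrable h' := j0.add k1
  have l2 : Integrable h'' := (j1.const_mul 2).add k2
  have hFd : ∀ w, HasDerivAt (𝓕 f) (-2 * π * Complex.I * 𝓕 h w) w := by
    intro w
    have := Real.hasDerivAt_fourier j0 (by simpa using k0) w
    convert! this using 1
    rw [Real.fourier_eq', Real.fourier_eq', ← integral_const_mul]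
    congr 1
    ext t
    simp only [hh, smul_eq_mul]
    ring
  set p : ℝ → ℝ := fun x => (2 * π)⁻¹ * (𝓕 f (x / (2 * π))).re with hp
  have hpd : ∀ x, HasDerivAt p
      ((2 * π)⁻¹ * (-Complex.I * 𝓕 h (x / (2 * π))).re) x := by
    intro x
    have h1 : HasDerivAt (fun x : ℝ => x / (2 * π)) (1 / (2 * π)) x := (hasDerivAt_id x).div_const _
    have h2 := (hFd (x / (2 * π))).scomp x h1
    have h3 := (Complex.reCLM.hasFDerivAt.comp_hasDerivAt x h2).const_mul (2 * π)⁻¹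
    convert! h3 using 1
    congr 1
    simp only [Complex.reCLM_apply, Complex.real_smul]
    congr 1
    have : (π : ℂ) ≠ 0 := by exact_mod_cast Real.pi_ne_zero
    push_cast
    field_simp
  have hderiv : deriv p = fun x => (2 * π)⁻¹ * (-Complex.I * 𝓕 h (x / (2 * π))).re :=
    funext fun x => (hpd x).deriv
  have hFh := aux_cont h k0
  have hcd : ContDiff ℝ 1 p := by
    rw [contDiff_one_iff_deriv]
    refine ⟨fun x => (hpd x).differentiableAt, ?_⟩
    rw [hderiv]
    have : Continuous fun x : ℝ => 𝓕 h (x / (2 * π)) := hFh.comp (by fun_prop)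
    fun_prop
  have hFi : Integrable (fun x : ℝ => 𝓕 f (x / (2 * π))) := by
    refine (integrable_inv_one_add_sq.const_mul _).mono'
      ((aux_cont f j0).comp (by fun_prop)).aestronglyMeasurable
      (Filter.Eventually.of_forall fun x => aux_decay f f' f'' hf' hf'' j0 j1 j2 x)
  have hFi' : Integrable (𝓕 f) := by
    have := hFi.comp_mul_right' (R := 2 * π) hpi.ne'
    simpa [mul_div_assoc, div_self hpi.ne'] using this
  refine ⟨p, hcd, ?_, ?_⟩
  · have : IsProbabilityMeasure (Measure.map X ℙ) := Measure.isProbabilityMeasure_map hXm.aemeasurable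
    refine aux_density _ p hcd.continuous (hFi.re.const_mul _) fun t => ?_
    have e1 : charFun (Measure.map X ℙ) t = f t := by
      rw [charFun_apply_real, integral_map hXm.aemeasurable (by fun_prop), hf]
      congr 1
      ext ω
      congr 1
      ring
    have e2 := congrFun (hfc.fourierInv_fourier_eq j0 hFi') t
    rw [e1, ← e2, Real.fourierInv_eq']
    have e3 := Measure.integral_comp_div
      (fun v : ℝ => Complex.exp (↑(2 * π * inner ℝ v t) * Complex.I) • 𝓕 f v) (2 * π)
    rw [abs_of_pos hpi] at e3
    have e4 : ∀ x y : ℂ, x = (2 * π : ℝ) • y → y = ((2 * π)⁻¹ : ℝ) • x := by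
      intro x y hxy
      rw [hxy, smul_smul, inv_mul_cancel₀ hpi.ne', one_smul]
    rw [e4 _ _ e3, ← integral_smul]
    congr 1
    ext x
    have e5 : ((p x : ℝ) : ℂ) = ((2 * π)⁻¹ : ℝ) * 𝓕 f (x / (2 * π)) := by
      rw [hp, Complex.ofReal_mul, hreal]
    rw [e5, Complex.real_smul, smul_eq_mul]
    have e6 : 2 * π * inner ℝ (x / (2 * π)) t = t * x := by
      simp only [RCLike.inner_apply, conj_trivial]
      field_simp
    rw [e6]
    push_cast
    ring
  · have b : ∀ x, |deriv p x| ≤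
        (2 * π)⁻¹ * (((∫ t, ‖h t‖) + ∫ t, ‖h'' t‖) * (1 + x ^ 2)⁻¹) := by
      intro x
      rw [hderiv, abs_mul, abs_of_pos (inv_pos.2 hpi)]
      gcongr
      refine (Complex.abs_re_le_norm _).trans ?_
      rw [norm_mul, norm_neg, Complex.norm_I, one_mul]
      exact aux_decay h h' h'' hd hd' k0 l1 l2 x
    have b2 : ∫ x, |deriv p x| ≤
        ∫ x : ℝ, (2 * π)⁻¹ * (((∫ t, ‖h t‖) + ∫ t, ‖h'' t‖) * (1 + x ^ 2)⁻¹) :=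
      integral_mono_of_nonneg (Filter.Eventually.of_forall fun x => abs_nonneg _)
        ((integrable_inv_one_add_sq.const_mul _).const_mul _) (Filter.Eventually.of_forall b)
    refine b2.trans ?_
    rw [integral_const_mul, integral_const_mul, integral_univ_inv_one_add_sq,
      ← integral_add k0.norm l2.norm]
    have b3 : ∫ t, (‖h t‖ + ‖h'' t‖) ≤
        ∫ t, (|t| * ‖f'' t‖ + 2 * ‖f' t‖ + |t| * ‖f t‖) := by
      refine integral_mono (k0.norm.add l2.norm) ((i2.add (j1.norm.const_mul 2)).add i0) fun t => ?_
      have := norm_add_le (2 * f' t) (t * f'' t)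
      simp only [norm_mul, Complex.norm_real, Real.norm_eq_abs, Complex.norm_ofNat] at this
      simp only [hh, hh'', norm_mul, Complex.norm_real, Real.norm_eq_abs]
      linarith
    have b4 : (2 * π)⁻¹ * ((∫ t, (‖h t‖ + ‖h'' t‖)) * π) = 1 / 2 * ∫ t, (‖h t‖ + ‖h'' t‖) := by
      have := Real.pi_ne_zero
      field_simp
    rw [b4]
    gcongr
end

section
/- Let X be a random variable whose characteristic function f has a continuous derivative for t > 0 and satisfies ∫ t²(|f(t)|² + |f'(t)|²) dt < ∞. Then X has an absolutely continuous distribution with density p of bounded variation and ‖p‖_TV ≤ (∫ |t f(t)|² dt · ∫ |(t f(t))'|² dt)^{1/4}. -/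
open MeasureTheory Real ProbabilityTheory

open scoped ENNReal

open scoped FourierTransform Topology SchwartzMap
open Filter


noncomputable def gK (c z : ℝ) : ℝ := Real.sqrt (π * c) * Real.exp (-(π ^ 2 * c * z ^ 2))

lemma gK_nonneg (c z : ℝ) : 0 ≤ gK c z := by unfold gK; positivity

lemma gK_cont (c : ℝ) : Continuous (gK c) := by unfold gK; fun_prop

lemma gK_lintegral {c : ℝ} (hc : 0 < c) (y : ℝ) :
    ∫⁻ x, ENNReal.ofReal (gK c (x - y)) = 1 := by
  have h1 : Integrable (gK c) := by
    have := (integrable_exp_neg_mul_sq (b := π ^ 2 * c) (by positivity)).const_mul (√(π * c))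
    refine this.congr (Eventually.of_forall fun x => ?_)
    simp [gK]
  rw [lintegral_sub_right_eq_self (fun x => ENNReal.ofReal (gK c x)) y,
    ← ofReal_integral_eq_lintegral_ofReal h1 (Eventually.of_forall (gK_nonneg c))]
  have : ∫ x, gK c x = 1 := by
    have h2 := integral_gaussian (π ^ 2 * c)
    have : ∀ x, gK c x = √(π * c) * Real.exp (-(π^2*c) * x^2) := by intro x; simp [gK]
    simp_rw [this]
    rw [integral_const_mul, h2, ← Real.sqrt_mul (by positivity)]
    rw [Real.sqrt_eq_one]
    field_simp
  simp [this]

lemma reg_eq (μ : Measure ℝ) [IsProbabilityMeasure μ] {c : ℝ} (hc : 0 < c) (x : ℝ) :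
    ∫ w : ℝ, Complex.exp (-(c : ℂ)⁻¹ * (‖w‖ : ℂ) ^ 2) • (𝐞 (-(w * x)) • charFun μ (2 * π * w))
      = ((∫ y, gK c (x - y) ∂μ : ℝ) : ℂ) := by
  have hint : Integrable (fun w : ℝ => Complex.exp (-(c:ℂ)⁻¹ * (w:ℂ)^2)) := by
    apply integrable_cexp_neg_mul_sq
    simpa using hc
  have key : ∀ w : ℝ, Complex.exp (-(c : ℂ)⁻¹ * (‖w‖ : ℂ) ^ 2) • (𝐞 (-(w * x)) • charFun μ (2 * π * w))
      = ∫ y, Complex.exp (Complex.I * (2 * π * (y - x) : ℝ) * w) * Complex.exp (-(c:ℂ)⁻¹ * (w:ℂ)^2) ∂μ := by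
    intro w
    rw [charFun_apply_real, Circle.smul_def, Real.fourierChar_apply, smul_eq_mul, smul_eq_mul,
      ← integral_const_mul, ← integral_const_mul]
    congr 1
    ext y
    have : (‖w‖ : ℂ) ^ 2 = (w:ℂ)^2 := by
      rw [← Complex.ofReal_pow, Real.norm_eq_abs, sq_abs, Complex.ofReal_pow]
    rw [this, ← Complex.exp_add, ← Complex.exp_add, ← Complex.exp_add]
    congr 1
    push_cast
    ring
  simp_rw [key]
  rw [integral_integral_swap]
  · rw [← integral_complex_ofReal]
    congr 1
    ext y
    rw [fourierIntegral_gaussian (by simpa using hc)]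
    unfold gK
    rw [Real.sqrt_eq_rpow]
    push_cast
    rw [Complex.ofReal_cpow (by positivity)]
    congr 1
    · push_cast; simp
    · congr 1
      have : (c:ℂ) ≠ 0 := by exact_mod_cast hc.ne'
      field_simp
      ring
  · have := hint.norm.mul_prod (ν := μ) (integrable_const (1:ℝ))
    refine this.mono' ?_ ?_
    · apply Continuous.aestronglyMeasurable
      simp only [Function.uncurry_def]
      fun_prop
    · refine Eventually.of_forall fun z => ?_
      simp only [Function.uncurry_def, norm_mul, mul_one]
      rw [Complex.norm_exp]
      simp

lemma density_of_charFun_integrable (μ : Measure ℝ) [IsProbabilityMeasure μ] (h : ℝ → ℂ)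
    (hh : ∀ w, h w = charFun μ (2 * π * w)) (hint : Integrable h) :
    μ = volume.withDensity (fun x => ENNReal.ofReal ((𝓕 h x).re)) := by
  have hcont : Continuous h := by
    have := (continuous_charFun (μ := μ)).comp (show Continuous (fun w : ℝ => 2 * π * w) by fun_prop)
    convert this using 1
    ext w; simp [hh]
  have hpc : Continuous (𝓕 h) := by
    exact VectorFourier.fourierIntegral_continuous Real.continuous_fourierChar
      (by exact continuous_inner) hint
  have hlim : ∀ x, Tendsto (fun c : ℝ => ((∫ y, gK c (x - y) ∂μ : ℝ) : ℂ)) atTop (𝓝 (𝓕 h x)) := by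
    intro x
    have h1 : Integrable (fun w => 𝐞 (-(w * x)) • h w) := by
      have := (VectorFourier.fourierIntegral_convergent_iff (μ := volume) (f := h) (L := innerₗ ℝ) Real.continuous_fourierChar (by exact continuous_inner) x).2 hint
      refine this.congr (Eventually.of_forall fun w => ?_)
      simp [mul_comm]
    have h2 := Real.tendsto_integral_cexp_sq_smul h1
    have h3 : ∫ v, 𝐞 (-(v * x)) • h v = 𝓕 h x := by
      rw [Real.fourier_real_eq]
    rw [h3] at h2
    refine h2.congr' ?_
    filter_upwards [Ioi_mem_atTop 0] with c hc
    rw [← reg_eq μ hc x]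
    simp [hh]
  have hnn : ∀ c x, 0 ≤ ∫ y, gK c (x - y) ∂μ := fun c x => integral_nonneg fun y => gK_nonneg _ _
  have hre : ∀ x, 0 ≤ (𝓕 h x).re := by
    intro x
    refine ge_of_tendsto ((Complex.continuous_re.tendsto _).comp (hlim x)) (Eventually.of_forall fun c => ?_)
    simpa using hnn c x
  have him : ∀ x, (𝓕 h x).im = 0 := by
    intro x
    refine tendsto_nhds_unique ((Complex.continuous_im.tendsto _).comp (hlim x)) ?_
    simp only [Function.comp_def, Complex.ofReal_im]
    exact tendsto_const_nhds
  have hof : ∀ x, (((𝓕 h x).re : ℝ) : ℂ) = 𝓕 h x := fun x => Complex.ext (by simp) (by simp [him])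
  have hbound : ∫⁻ x, ‖𝓕 h x‖ₑ ≤ 1 := by
    have hF := lintegral_liminf_le' (u := atTop) (μ := volume) (f := fun (n : ℕ) (x : ℝ) => ‖((∫ y, gK (n+1) (x - y) ∂μ : ℝ) : ℂ)‖ₑ) ?_
    · have h1 : ∀ x, liminf (fun n : ℕ => ‖((∫ y, gK (n+1) (x - y) ∂μ : ℝ) : ℂ)‖ₑ) atTop = ‖𝓕 h x‖ₑ := by
        intro x
        apply Tendsto.liminf_eq
        refine ((hlim x).comp (?_ : Tendsto (fun n : ℕ => (n:ℝ)+1) atTop atTop)).enorm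
        exact tendsto_atTop_add_const_right _ _ tendsto_natCast_atTop_atTop
      simp_rw [h1] at hF
      refine hF.trans ?_
      apply liminf_le_of_frequently_le'
      apply Frequently.of_forall
      intro n
      calc ∫⁻ x, ‖((∫ y, gK (n+1) (x - y) ∂μ : ℝ) : ℂ)‖ₑ 
          ≤ ∫⁻ x, ∫⁻ y, ENNReal.ofReal (gK (n+1) (x-y)) ∂μ := by
            apply lintegral_mono
            intro x
            have : ‖((∫ y, gK (n+1) (x - y) ∂μ : ℝ) : ℂ)‖ₑ = ‖∫ y, gK (n+1) (x - y) ∂μ‖ₑ := by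
              simp [enorm_eq_nnnorm]
            simp only [this]
            refine (enorm_integral_le_lintegral_enorm _).trans (le_of_eq ?_)
            congr 1; ext y
            rw [Real.enorm_of_nonneg (gK_nonneg _ _)]
        _ = ∫⁻ y, (∫⁻ x, ENNReal.ofReal (gK (n+1) (x-y))) ∂μ := by
            rw [lintegral_lintegral_swap]
            have := gK_cont (n+1)
            apply Measurable.aemeasurable
            simp only [Function.uncurry_def]
            exact (this.comp (continuous_fst.sub continuous_snd)).measurable.ennreal_ofReal
        _ = 1 := by
            simp_rw [gK_lintegral (show (0:ℝ) < n + 1 by positivity)]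
            simp
    · intro n
      have := gK_cont (n+1)
      have hm : StronglyMeasurable (fun x : ℝ => ∫ y, gK (n+1) (x - y) ∂μ) := by
        apply StronglyMeasurable.integral_prod_right
        simp only [Function.uncurry_def]
        exact (this.comp (continuous_fst.sub continuous_snd)).stronglyMeasurable
      exact ((Complex.measurable_ofReal.comp hm.measurable).enorm).aemeasurable
  have hpint : Integrable (𝓕 h) := ⟨hpc.aestronglyMeasurable, hbound.trans_lt (by simp)⟩
  have hpintr : Integrable (fun x => (𝓕 h x).re) := hpint.re
  have : IsFiniteMeasure (volume.withDensity (fun x => ENNReal.ofReal ((𝓕 h x).re))) :=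
    isFiniteMeasure_withDensity_ofReal hpintr.2
  apply Measure.ext_of_charFun
  have hinv := hcont.fourierInv_fourier_eq hint hpint
  ext t
  have h1 : charFun μ t = h (t / (2 * π)) := by
    rw [hh]; congr 1; field_simp
  rw [h1, ← congrFun hinv, charFun_apply_real, Real.fourierInv_eq',
    integral_withDensity_eq_integral_toReal_smul]
  · congr 1; ext x
    rw [ENNReal.toReal_ofReal (hre x), Complex.real_smul, hof, smul_eq_mul, mul_comm]
    congr 2
    simp
    field_simp
  · exact (Complex.measurable_re.comp hpc.measurable).ennreal_ofReal
  · simp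

lemma L2_pair_schwartz (u : Lp ℂ 2 (volume : Measure ℝ)) (φ : 𝓢(ℝ, ℂ)) :
    ∫ x, 𝓕 (φ : ℝ → ℂ) x * u x = ∫ x, φ x * (𝓕 u : Lp ℂ 2 (volume : Measure ℝ)) x := by
  have h := Lp.fourier_toTemperedDistribution_eq u
  have h2 := congrArg (fun T : 𝓢'(ℝ, ℂ) => T φ) h
  simpa [TemperedDistribution.fourier_apply, SchwartzMap.fourier_coe] using h2

lemma L2_fourier_ae (g : ℝ → ℂ) (hg : Integrable g) (hg2 : MemLp g 2) :
    ((𝓕 (hg2.toLp g) : Lp ℂ 2 (volume : Measure ℝ)) : ℝ → ℂ) =ᵐ[volume] 𝓕 g := by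
  have hc : Continuous (𝓕 g) := VectorFourier.fourierIntegral_continuous Real.continuous_fourierChar
      (by exact continuous_inner) hg
  apply ae_eq_of_integral_contDiff_smul_eq
  · exact (Lp.memLp (𝓕 (hg2.toLp g) : Lp ℂ 2 (volume : Measure ℝ))).locallyIntegrable (by norm_num)
  · exact hc.locallyIntegrable
  · intro η hη hηc
    let η' : ℝ → ℂ := fun x => (η x : ℂ)
    have h1 : ContDiff ℝ (⊤ : ℕ∞) η' := Complex.ofRealCLM.contDiff.comp hη
    have h2 : HasCompactSupport η' := hηc.comp_left (g := Complex.ofReal) (by simp)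
    let φ : 𝓢(ℝ, ℂ) := h2.toSchwartzMap h1
    have h3 := L2_pair_schwartz (hg2.toLp g) φ
    have hφ : ∀ x, φ x = η x := fun x => rfl
    have h4 : ∫ x, 𝓕 (φ : ℝ → ℂ) x * (hg2.toLp g) x = ∫ x, 𝓕 (φ : ℝ → ℂ) x * g x := by
      apply integral_congr_ae
      filter_upwards [hg2.coeFn_toLp] with x hx
      rw [hx]
    have h5 : ∫ x, 𝓕 (φ : ℝ → ℂ) x * g x = ∫ x, φ x * 𝓕 g x := by
      simpa using! (VectorFourier.integral_fourierIntegral_smul_eq_flip (L := innerₗ ℝ)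
        Real.continuous_fourierChar (by exact continuous_inner) φ.integrable hg)
    rw [h4, h5] at h3
    simp_rw [hφ] at h3
    simpa [Complex.real_smul] using h3.symm

lemma L2_pair (u g : Lp ℂ 2 (volume : Measure ℝ)) :
    ∫ x, (𝓕 g : Lp ℂ 2 (volume : Measure ℝ)) x * u x = ∫ x, g x * (𝓕 u : Lp ℂ 2 (volume : Measure ℝ)) x := by
  have hin : ∀ a b : Lp ℂ 2 (volume : Measure ℝ), inner ℂ (star b) a = ∫ x, a x * b x := by
    intro a b
    rw [L2.inner_def]
    apply integral_congr_ae
    filter_upwards [Lp.coeFn_star b] with x hx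
    rw [hx]
    simp
  rw [← hin, ← hin]
  apply DenseRange.induction_on (p := fun g : Lp ℂ 2 (volume : Measure ℝ) => inner ℂ (star u) (𝓕 g) = inner ℂ (star (𝓕 u)) g)
    (SchwartzMap.denseRange_toLpCLM (p := 2) ENNReal.ofNat_ne_top) g
  · apply isClosed_eq
    · exact continuous_const.inner (Lp.fourierTransformₗᵢ ℝ ℂ).continuous
    · exact continuous_const.inner continuous_id
  · intro φ
    rw [hin, hin, SchwartzMap.toLpCLM_apply, SchwartzMap.toLp_fourier_eq]
    have := L2_pair_schwartz u φ
    rw [← SchwartzMap.fourier_coe] at this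
    convert this using 1
    · apply integral_congr_ae
      filter_upwards [(𝓕 φ).coeFn_toLp 2 volume] with x hx
      rw [hx]
    · apply integral_congr_ae
      filter_upwards [φ.coeFn_toLp 2 volume] with x hx
      rw [hx]

lemma fourier_L2 (u : ℝ → ℂ) (hu : MemLp u 2) :
    ∃ Q : ℝ → ℂ, MemLp Q 2 ∧ eLpNorm Q 2 volume = eLpNorm u 2 volume ∧
      ∀ g : ℝ → ℂ, Integrable g → MemLp g 2 → ∫ x, 𝓕 g x * u x = ∫ x, g x * Q x := by
  refine ⟨(𝓕 (hu.toLp u) : Lp ℂ 2 (volume : Measure ℝ)), Lp.memLp _, ?_, ?_⟩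
  · have := Lp.norm_fourier_eq (hu.toLp u)
    rw [Lp.norm_def, Lp.norm_def, ENNReal.toReal_eq_toReal_iff' (Lp.eLpNorm_ne_top _) (Lp.eLpNorm_ne_top _)] at this
    rw [this]
    exact eLpNorm_congr_ae hu.coeFn_toLp
  · intro g hg hg2
    have := L2_pair (hu.toLp u) (hg2.toLp g)
    convert this using 1
    · apply integral_congr_ae
      filter_upwards [hu.coeFn_toLp, L2_fourier_ae g hg hg2] with x hx hx2
      rw [hx, hx2]
    · apply integral_congr_ae
      filter_upwards [hg2.coeFn_toLp] with x hx
      rw [hx]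

lemma L2_deriv (u v Q R : ℝ → ℂ) (hu : MemLp u 2) (hv : MemLp v 2)
    (hQ : MemLp Q 2) (hR : MemLp R 2)
    (hd : ∀ t, HasDerivAt u (v t) t)
    (hQg : ∀ g : ℝ → ℂ, Integrable g → MemLp g 2 → ∫ x, 𝓕 g x * u x = ∫ x, g x * Q x)
    (hRg : ∀ g : ℝ → ℂ, Integrable g → MemLp g 2 → ∫ x, 𝓕 g x * v x = ∫ x, g x * R x) :
    ∀ᵐ x, R x = (2 * π * Complex.I * x) * Q x := by
  apply ae_eq_of_integral_contDiff_smul_eq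
  · exact hR.locallyIntegrable (by norm_num)
  · rw [← locallyIntegrableOn_univ]
    refine LocallyIntegrableOn.continuousOn_mul (g := fun x : ℝ => (2 * π * Complex.I * x : ℂ)) ?_ ?_ isOpen_univ.isLocallyClosed
    · rw [locallyIntegrableOn_univ]; exact hQ.locallyIntegrable (by norm_num)
    · exact Continuous.continuousOn (by fun_prop)
  · intro η hη hηc
    let η' : ℝ → ℂ := fun x => (η x : ℂ)
    have h1 : ContDiff ℝ (⊤ : ℕ∞) η' := Complex.ofRealCLM.contDiff.comp hη
    have h2 : HasCompactSupport η' := hηc.comp_left (g := Complex.ofReal) (by simp)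
    let φ : 𝓢(ℝ, ℂ) := h2.toSchwartzMap h1
    have h3 : ContDiff ℝ (⊤ : ℕ∞) (fun x : ℝ => (-2 * π * Complex.I * x) * η' x) := by
      apply ContDiff.mul _ h1
      exact contDiff_const.mul Complex.ofRealCLM.contDiff
    have h4 : HasCompactSupport (fun x : ℝ => (-2 * π * Complex.I * x) * η' x) := h2.mul_left
    let ψ : 𝓢(ℝ, ℂ) := h4.toSchwartzMap h3
    have hφ : ∀ x, φ x = η x := fun x => rfl
    have hψ : ∀ x, ψ x = (-2 * π * Complex.I * x) * η x := fun x => rfl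
    have hder : ∀ w, HasDerivAt (𝓕 (φ : ℝ → ℂ)) (𝓕 (ψ : ℝ → ℂ) w) w := by
      intro w
      refine Real.hasDerivAt_fourier φ.integrable ?_ w
      have : HasCompactSupport (fun x : ℝ => x • φ x) := HasCompactSupport.smul_left (f := fun x : ℝ => x) (f' := φ) h2
      exact (continuous_id.smul φ.continuous).integrable_of_hasCompactSupport this
    have e1 := hRg φ φ.integrable (φ.memLp 2 volume)
    have e2 := hQg ψ ψ.integrable (ψ.memLp 2 volume)
    have m1 : MemLp (𝓕 (φ : ℝ → ℂ)) 2 := by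
      rw [← SchwartzMap.fourier_coe]; exact (𝓕 φ).memLp 2 volume
    have m2 : MemLp (𝓕 (ψ : ℝ → ℂ)) 2 := by
      rw [← SchwartzMap.fourier_coe]; exact (𝓕 ψ).memLp 2 volume
    have e3 := integral_mul_deriv_eq_deriv_mul_of_integrable (u := 𝓕 (φ : ℝ → ℂ)) (v := u)
      (u' := 𝓕 (ψ : ℝ → ℂ)) (v' := v) (fun x _ => hder x) (fun x _ => hd x) (m1.integrable_mul hv) (m2.integrable_mul hu)
      (m1.integrable_mul hu)
    rw [e1, e2] at e3
    simp_rw [hφ, hψ] at e3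
    simp only [Complex.real_smul]
    rw [e3, ← integral_neg]
    congr 1; ext x; ring

lemma fourier_indicator (a b : ℝ) (hab : a ≤ b) (w : ℝ) :
    (-2 * π * Complex.I * w) * 𝓕 ((Set.Ioc a b).indicator (fun _ => (1:ℂ))) w
      = 𝐞 (-(w * b)) - 𝐞 (-(w * a)) := by
  rw [Real.fourier_real_eq]
  have : ∀ v : ℝ, 𝐞 (-(v * w)) • (Set.Ioc a b).indicator (fun _ => (1:ℂ)) v
      = (Set.Ioc a b).indicator (fun v : ℝ => Complex.exp ((-2 * π * Complex.I * w) * v)) v := by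
    intro v
    by_cases hv : v ∈ Set.Ioc a b
    · simp only [hv, Set.indicator_of_mem]
      rw [Circle.smul_def, Real.fourierChar_apply, smul_eq_mul, mul_one]
      congr 1; push_cast; ring
    · simp [hv]
  simp_rw [this]
  rw [integral_indicator measurableSet_Ioc, ← intervalIntegral.integral_of_le hab]
  by_cases hw : w = 0
  · simp [hw]
  · have hc : (-2 * π * Complex.I * w : ℂ) ≠ 0 := by
      simp [hw, Real.pi_ne_zero]
    rw [integral_exp_mul_complex hc, mul_div_cancel₀ _ hc, Real.fourierChar_apply, Real.fourierChar_apply]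
    congr 2 <;> · push_cast; ring

lemma fourier_diff (h Q : ℝ → ℂ) (hh : Integrable h)
    (hQg : ∀ g : ℝ → ℂ, Integrable g → MemLp g 2 → ∫ x, 𝓕 g x * ((x : ℂ) * h x) = ∫ x, g x * Q x)
    (a b : ℝ) (hab : a ≤ b) :
    𝓕 h b - 𝓕 h a = (-2 * π * Complex.I) * ∫ x in Set.Ioc a b, Q x := by
  have i0 : ∀ x : ℝ, Integrable (fun w => 𝐞 (-(w * x)) • h w) := by
    intro x
    have := (VectorFourier.fourierIntegral_convergent_iff (μ := volume) (f := h) (L := innerₗ ℝ) Real.continuous_fourierChar (by exact continuous_inner) x).2 hh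
    refine this.congr (Eventually.of_forall fun w => ?_)
    simp [mul_comm]
  have e := hQg ((Set.Ioc a b).indicator (fun _ => (1:ℂ)))
    ((integrable_indicator_iff measurableSet_Ioc).2 (by simp))
    (memLp_indicator_const 2 measurableSet_Ioc 1 (by simp))
  have e1 : ∫ x in Set.Ioc a b, Q x = ∫ x, (Set.Ioc a b).indicator (fun _ => (1:ℂ)) x * Q x := by
    rw [← integral_indicator measurableSet_Ioc]
    congr 1; ext x
    by_cases hx : x ∈ Set.Ioc a b <;> simp [hx]
  rw [e1, ← e, ← integral_const_mul, Real.fourier_real_eq, Real.fourier_real_eq, ← integral_sub (i0 b) (i0 a)]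
  congr 1; ext w
  have := fourier_indicator a b hab w
  rw [Circle.smul_def, Circle.smul_def, smul_eq_mul, smul_eq_mul, ← sub_mul, ← this]
  ring

lemma eVar_le (p : ℝ → ℝ) (q : ℝ → ℝ≥0∞)
    (hp : ∀ a b, a ≤ b → edist (p b) (p a) ≤ ∫⁻ x in Set.Ioc a b, q x) :
    eVariationOn p Set.univ ≤ ∫⁻ x, q x := by
  apply iSup_le
  rintro ⟨n, u, hu, -⟩
  simp only
  have : ∀ n : ℕ, ∑ i ∈ Finset.range n, edist (p (u (i+1))) (p (u i)) ≤ ∫⁻ x in Set.Ioc (u 0) (u n), q x := by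
    intro n
    induction n with
    | zero => simp
    | succ n ih =>
      rw [Finset.sum_range_succ, ← Set.Ioc_union_Ioc_eq_Ioc (hu (Nat.zero_le n)) (hu (Nat.le_succ n)),
        lintegral_union measurableSet_Ioc (Set.Ioc_disjoint_Ioc_of_le le_rfl)]
      exact add_le_add ih (hp _ _ (hu (Nat.le_succ n)))
  exact (this n).trans (setLIntegral_le_lintegral _ _)

lemma L1_bound (Q : ℝ → ℂ) (hQ : MemLp Q 2) (hxQ : MemLp (fun x : ℝ => (x : ℂ) * Q x) 2) :
    ∫⁻ x, ‖Q x‖ₑ ≤ ENNReal.ofReal (√(2 * π * (√(∫ x, ‖Q x‖ ^ 2) * √(∫ x : ℝ, ‖(x : ℂ) * Q x‖ ^ 2)))) := by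
  have i1 : Integrable (fun x => ‖Q x‖ ^ 2) := by
    simpa using hQ.integrable_norm_pow (by norm_num)
  have i2 : Integrable (fun x : ℝ => ‖(x:ℂ) * Q x‖ ^ 2) := by
    simpa only [Nat.cast_ofNat] using hxQ.integrable_norm_pow (by norm_num)
  set A := ∫ x, ‖Q x‖ ^ 2 with hA
  set B := ∫ x : ℝ, ‖(x:ℂ) * Q x‖ ^ 2 with hB
  have hA0 : 0 ≤ A := integral_nonneg fun x => by positivity
  have hB0 : 0 ≤ B := integral_nonneg fun x => by positivity
  by_cases hz : ∀ᵐ x, Q x = 0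
  · have : ∫⁻ x, ‖Q x‖ₑ = 0 := by
      rw [lintegral_eq_zero_iff' hQ.1.enorm]
      filter_upwards [hz] with x hx
      simp [hx]
    simp [this]
  have hApos : 0 < A := by
    refine lt_of_le_of_ne hA0 fun h0 => hz ?_
    have := (integral_eq_zero_iff_of_nonneg (fun x => by positivity) i1).1 h0.symm
    filter_upwards [this] with x hx
    simpa using hx
  have hBpos : 0 < B := by
    refine lt_of_le_of_ne hB0 fun h0 => hz ?_
    have := (integral_eq_zero_iff_of_nonneg (fun x => by positivity) i2).1 h0.symm
    have h00 : ∀ᵐ x : ℝ, x ≠ 0 := by simp [ae_iff]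
    filter_upwards [this, h00] with x hx hx0
    simpa [hx0] using hx
  set a := √A
  set b := √B
  have ha : 0 < a := Real.sqrt_pos.2 hApos
  have hb : 0 < b := Real.sqrt_pos.2 hBpos
  have hAa : A = a ^ 2 := (Real.sq_sqrt hA0).symm
  have hBb : B = b ^ 2 := (Real.sq_sqrt hB0).symm
  set T := √(2 * π * (a * b)) with hT
  have hTpos : 0 < T := Real.sqrt_pos.2 (by positivity)
  have hT2 : T ^ 2 = 2 * π * (a * b) := Real.sq_sqrt (by positivity)
  -- choice of parameters
  set l := a / b with hl
  have hlpos : 0 < l := by positivity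
  set s := T * l / π with hs
  have hspos : 0 < s := by positivity
  have i3 : Integrable (fun x : ℝ => (1 + (l * x) ^ 2)⁻¹) :=
    integrable_inv_one_add_sq.comp_mul_left' hlpos.ne'
  have v3 : ∫ x : ℝ, (1 + (l * x) ^ 2)⁻¹ = π / l := by
    rw [Measure.integral_comp_mul_left (fun x : ℝ => (1 + x ^ 2)⁻¹) l, integral_univ_inv_one_add_sq,
      abs_of_pos (by positivity), smul_eq_mul]
    field_simp
  have hpt : ∀ x : ℝ, ‖Q x‖ ≤ 1 / 2 * (s * (1 + (l * x) ^ 2)⁻¹ + s⁻¹ * (‖Q x‖ ^ 2 + l ^ 2 * ‖(x:ℂ) * Q x‖ ^ 2)) := by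
    intro x
    have : ‖(x:ℂ) * Q x‖ ^ 2 = x ^ 2 * ‖Q x‖ ^ 2 := by
      rw [norm_mul, mul_pow]; simp
    rw [this]
    set y := ‖Q x‖
    set D := 1 + (l * x) ^ 2 with hD
    have hDpos : 0 < D := by positivity
    have : y ^ 2 + l ^ 2 * (x ^ 2 * y ^ 2) = D * y ^ 2 := by rw [hD]; ring
    rw [this]
    have h5 : 1 / 2 * (s * D⁻¹ + s⁻¹ * (D * y ^ 2)) - y = (s - D * y) ^ 2 / (2 * s * D) := by
      field_simp
      ring
    have h6 : 0 ≤ (s - D * y) ^ 2 / (2 * s * D) := by positivity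
    linarith
  have iR : Integrable (fun x : ℝ => 1 / 2 * (s * (1 + (l * x) ^ 2)⁻¹ + s⁻¹ * (‖Q x‖ ^ 2 + l ^ 2 * ‖(x:ℂ) * Q x‖ ^ 2))) :=
    ((i3.const_mul s).add ((i1.add (i2.const_mul (l ^ 2))).const_mul s⁻¹)).const_mul _
  have iQ : Integrable Q := iR.mono' hQ.1 (Eventually.of_forall hpt)
  have hle : ∫ x, ‖Q x‖ ≤ T := by
    refine (integral_mono iQ.norm iR hpt).trans (le_of_eq ?_)
    have i4 : Integrable (fun x : ℝ => s⁻¹ * (‖Q x‖ ^ 2 + l ^ 2 * ‖(x:ℂ) * Q x‖ ^ 2)) :=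
      (i1.add (i2.const_mul (l ^ 2))).const_mul s⁻¹
    rw [integral_const_mul, integral_add (i3.const_mul s) i4,
      integral_const_mul, integral_const_mul, integral_add i1 (i2.const_mul (l ^ 2)), integral_const_mul, v3,
      ← hA, ← hB, hAa, hBb, hs, hl]
    field_simp
    nlinarith [hT2]
  rw [← ofReal_integral_norm_eq_lintegral_enorm iQ]
  exact ENNReal.ofReal_le_ofReal hle

lemma memLp_two_sq_integral (u Q : ℝ → ℂ) (hu : MemLp u 2) (hQ : MemLp Q 2)
    (h : eLpNorm Q 2 volume = eLpNorm u 2 volume) : ∫ x, ‖Q x‖ ^ 2 = ∫ x, ‖u x‖ ^ 2 := by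
  have key : ∀ g : ℝ → ℂ, MemLp g 2 → ∫ x, ‖g x‖ ^ 2 = (eLpNorm g 2 volume).toReal ^ 2 := by
    intro g hg
    have h1 := hg.eLpNorm_eq_integral_rpow_norm (by norm_num) (by norm_num)
    have h0 : 0 ≤ ∫ x, ‖g x‖ ^ 2 := integral_nonneg fun x => by positivity
    rw [h1, ENNReal.toReal_ofReal (by positivity)]
    simp only [ENNReal.toReal_ofNat, Real.rpow_ofNat]
    rw [← Real.rpow_natCast, ← Real.rpow_mul h0]
    norm_num
  rw [key Q hQ, key u hu, h]

lemma eVar_bound (h V : ℝ → ℂ) (hh : Integrable h) (hU : MemLp (fun w : ℝ => (w : ℂ) * h w) 2)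
    (hV : MemLp V 2) (hd : ∀ t : ℝ, HasDerivAt (fun w : ℝ => (w : ℂ) * h w) (V t) t) :
    eVariationOn (fun x => (𝓕 h x).re) Set.univ ≤
      ENNReal.ofReal (2 * π * √(√(∫ w : ℝ, ‖(w : ℂ) * h w‖ ^ 2) * √(∫ w, ‖V w‖ ^ 2))) := by
  obtain ⟨Q, hQ, nQ, hQg⟩ := fourier_L2 _ hU
  obtain ⟨R, hR, nR, hRg⟩ := fourier_L2 _ hV
  have hRQ := L2_deriv _ V Q R hU hV hQ hR hd hQg hRg
  have hae : (fun x => (2 * π * Complex.I)⁻¹ * R x) =ᵐ[volume] (fun x : ℝ => (x : ℂ) * Q x) := by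
    filter_upwards [hRQ] with x hx
    rw [hx]
    have : (π : ℂ) ≠ 0 := by exact_mod_cast Real.pi_ne_zero
    have := Complex.I_ne_zero
    field_simp
  have hxQ : MemLp (fun x : ℝ => (x : ℂ) * Q x) 2 := (hR.const_mul _).ae_eq hae
  have nxQ : ∫ x : ℝ, ‖(x : ℂ) * Q x‖ ^ 2 = ((2 * π) ^ 2)⁻¹ * ∫ w, ‖V w‖ ^ 2 := by
    rw [← memLp_two_sq_integral V R hV hR nR, ← integral_const_mul]
    apply integral_congr_ae
    filter_upwards [hae] with x hx
    rw [← hx, norm_mul, mul_pow]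
    congr 1
    simp [abs_of_pos Real.pi_pos, mul_pow]
  have hb := L1_bound Q hQ hxQ
  rw [nxQ, memLp_two_sq_integral _ Q hU hQ nQ, Real.sqrt_mul (x := ((2 * π) ^ 2)⁻¹) (by positivity), Real.sqrt_inv, Real.sqrt_sq (by positivity)] at hb
  have hpi : 2 * π * (√(∫ w : ℝ, ‖(w : ℂ) * h w‖ ^ 2) * ((2 * π)⁻¹ * √(∫ w, ‖V w‖ ^ 2)))
      = √(∫ w : ℝ, ‖(w : ℂ) * h w‖ ^ 2) * √(∫ w, ‖V w‖ ^ 2) := by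
    field_simp
  rw [hpi] at hb
  have hv := eVar_le (fun x => (𝓕 h x).re) (fun x => ENNReal.ofReal (2 * π) * ‖Q x‖ₑ) ?_
  · refine hv.trans ?_
    rw [lintegral_const_mul' _ _ ENNReal.ofReal_ne_top, ENNReal.ofReal_mul (p := 2 * π) (by positivity)]
    gcongr
  · intro a b hab
    have e := fourier_diff h Q hh hQg a b hab
    calc edist (𝓕 h b).re (𝓕 h a).re ≤ ‖𝓕 h b - 𝓕 h a‖ₑ := by
          rw [edist_eq_enorm_sub, ← Complex.sub_re, enorm_le_iff_norm_le]
          exact Complex.abs_re_le_norm _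
      _ = ENNReal.ofReal (2 * π) * ‖∫ x in Set.Ioc a b, Q x‖ₑ := by
          rw [e, enorm_mul]
          congr 1
          rw [← ofReal_norm]
          congr 1
          simp [abs_of_pos Real.pi_pos]
      _ ≤ ENNReal.ofReal (2 * π) * ∫⁻ x in Set.Ioc a b, ‖Q x‖ₑ := by
          gcongr
          exact enorm_integral_le_lintegral_enorm _
      _ = _ := by rw [lintegral_const_mul' _ _ ENNReal.ofReal_ne_top]

lemma final_const (A B : ℝ) (hA : 0 ≤ A) (hB : 0 ≤ B) :
    2 * π * √(√(((2 * π) ^ 3)⁻¹ * A) * √((2 * π)⁻¹ * B)) = (A * B) ^ ((1 : ℝ) / 4) := by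
  have h1 : √(((2 * π) ^ 3)⁻¹ * A) * √((2 * π)⁻¹ * B) = ((2 * π) ^ 2)⁻¹ * √(A * B) := by
    rw [← Real.sqrt_mul (by positivity)]
    have : ((2 * π) ^ 3)⁻¹ * A * ((2 * π)⁻¹ * B) = (((2 * π) ^ 2)⁻¹) ^ 2 * (A * B) := by
      field_simp
    rw [this, Real.sqrt_mul (by positivity), Real.sqrt_sq (by positivity)]
  rw [h1, Real.sqrt_mul (by positivity), Real.sqrt_inv, Real.sqrt_sq (by positivity),
    mul_inv_cancel_left₀ (by positivity), Real.sqrt_eq_rpow, Real.sqrt_eq_rpow,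
    ← Real.rpow_mul (by positivity)]
  norm_num

/-- If the characteristic function `f` of `X` has a continuous derivative `f'` for `t > 0`
and `∫ t² (|f(t)|² + |f'(t)|²) dt < ∞`, then `X` has an absolutely continuous distribution
with density `p` of bounded variation satisfying
`‖p‖_TV ≤ (∫ |t f(t)|² dt · ∫ |(t f(t))'|² dt)^{1/4}`. -/
theorem density_tv_bound_of_charFun_L2
    {Ω : Type*} [MeasureSpace Ω] [IsProbabilityMeasure (ℙ : Measure Ω)]
    (X : Ω → ℝ) (hXm : Measurable X)
    (f f' : ℝ → ℂ)
    (hf : ∀ t : ℝ, f t = ∫ ω, Complex.exp (Complex.I * t * X ω))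
    (hf' : ∀ t : ℝ, t ≠ 0 → HasDerivAt f (f' t) t)
    (hcont : ContinuousOn f' (Set.Ioi 0))
    (hint : Integrable (fun t => t ^ 2 * (‖f t‖ ^ 2 + ‖f' t‖ ^ 2))) :
    ∃ p : ℝ → ℝ,
      Measure.map X ℙ = volume.withDensity (fun x => ENNReal.ofReal (p x)) ∧
      eVariationOn p Set.univ ≤ ENNReal.ofReal
        (((∫ t : ℝ, ‖(t : ℂ) * f t‖ ^ 2) *
          (∫ t : ℝ, ‖f t + (t : ℂ) * f' t‖ ^ 2)) ^ ((1 : ℝ) / 4)) := by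

  set μ : Measure ℝ := Measure.map X ℙ with hμ
  have hprob : IsProbabilityMeasure μ := Measure.isProbabilityMeasure_map hXm.aemeasurable
  have hfc : ∀ t, f t = charFun μ t := by
    intro t
    rw [hf, charFun_apply_real, hμ, integral_map hXm.aemeasurable
      (Continuous.aestronglyMeasurable (by fun_prop))]
    congr 1; ext ω; congr 1; ring
  have hf1 : ∀ t, ‖f t‖ ≤ 1 := fun t => by rw [hfc]; exact norm_charFun_le_one t
  have hfcont : Continuous f := by
    have : f = charFun μ := funext hfc
    rw [this]; exact continuous_charFun
  have hd : ∀ t : ℝ, HasDerivAt (fun t : ℝ => (t : ℂ) * f t) (f t + (t : ℂ) * f' t) t := by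
    intro t
    by_cases ht : t = 0
    · subst ht
      rw [hasDerivAt_iff_tendsto_slope]
      have h1 : Tendsto f (𝓝[≠] 0) (𝓝 (f 0)) := (hfcont.tendsto 0).mono_left nhdsWithin_le_nhds
      simp only [Complex.ofReal_zero, zero_mul, add_zero]
      refine h1.congr' ?_
      filter_upwards [self_mem_nhdsWithin] with y hy
      have hy' : (y : ℂ) ≠ 0 := by exact_mod_cast hy
      simp [slope_def_module, hy']
    · have h1 : HasDerivAt (fun t : ℝ => (t : ℂ)) 1 t := Complex.ofRealCLM.hasDerivAt
      have h2 := h1.mul (hf' t ht)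
      rw [one_mul] at h2
      exact h2
  have hV_deriv : (fun t : ℝ => f t + (t : ℂ) * f' t) = deriv (fun t : ℝ => (t : ℂ) * f t) :=
    funext fun t => ((hd t).deriv).symm
  have hVm : Measurable (fun t : ℝ => f t + (t : ℂ) * f' t) := by
    rw [hV_deriv]; exact measurable_deriv _
  have hUc : Continuous (fun t : ℝ => (t : ℂ) * f t) := by fun_prop
  have hUn : ∀ t : ℝ, ‖(t : ℂ) * f t‖ ^ 2 = t ^ 2 * ‖f t‖ ^ 2 := by
    intro t; rw [norm_mul, mul_pow]; simp
  have hU2 : Integrable (fun t : ℝ => ‖(t : ℂ) * f t‖ ^ 2) := by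
    refine hint.mono' (hUc.norm.pow 2).aestronglyMeasurable (Eventually.of_forall fun t => ?_)
    rw [hUn, Real.norm_of_nonneg (by positivity)]
    gcongr
    nlinarith [sq_nonneg ‖f' t‖]
  have hfint : Integrable f := by
    refine ((integrable_inv_one_add_sq.const_mul 2).add hU2).mono' hfcont.aestronglyMeasurable
      (Eventually.of_forall fun t => ?_)
    simp only [Pi.add_apply, hUn]
    have h0 := hf1 t
    have h1 := norm_nonneg (f t)
    set y := ‖f t‖
    have hD : 0 < 1 + t ^ 2 := by positivity
    rw [← sub_nonneg]
    have : 2 * (1 + t ^ 2)⁻¹ + t ^ 2 * y ^ 2 - y = (2 + (1 + t^2) * (t ^ 2 * y ^ 2 - y)) / (1 + t ^ 2) := by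
      field_simp
      ring
    rw [this]
    apply div_nonneg _ hD.le
    nlinarith [sq_nonneg (t ^ 2 * y - 1), sq_nonneg (t * y), sq_nonneg (t^2*y), sq_nonneg (1 - y), mul_nonneg h1 (sub_nonneg.2 h0), mul_nonneg (sq_nonneg t) h1]
  have hf2 : Integrable (fun t => ‖f t‖ ^ 2) := by
    refine hfint.norm.mono' (hfcont.norm.pow 2).aestronglyMeasurable (Eventually.of_forall fun t => ?_)
    rw [Real.norm_of_nonneg (by positivity)]
    nlinarith [hf1 t, norm_nonneg (f t)]
  have hV2 : Integrable (fun t : ℝ => ‖f t + (t : ℂ) * f' t‖ ^ 2) := by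
    refine ((hf2.const_mul 2).add (hint.const_mul 2)).mono' (hVm.norm.pow_const 2).aestronglyMeasurable
      (Eventually.of_forall fun t => ?_)
    simp only [Pi.add_apply]
    rw [Real.norm_of_nonneg (by positivity)]
    have h1 : ‖f t + (t : ℂ) * f' t‖ ≤ ‖f t‖ + ‖(t : ℂ) * f' t‖ := norm_add_le _ _
    have h2 : ‖(t : ℂ) * f' t‖ ^ 2 = t ^ 2 * ‖f' t‖ ^ 2 := by rw [norm_mul, mul_pow]; simp
    have h3 := norm_nonneg (f t + (t : ℂ) * f' t)
    have h4 : ‖f t + (t : ℂ) * f' t‖ ^ 2 ≤ (‖f t‖ + ‖(t : ℂ) * f' t‖) ^ 2 := by gcongr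
    nlinarith [sq_nonneg (‖f t‖ - ‖(t : ℂ) * f' t‖), mul_nonneg (sq_nonneg t) (sq_nonneg ‖f t‖)]
  -- rescaling
  have hpi0 : (2 * π) ≠ 0 := by positivity
  set h : ℝ → ℂ := fun w => f (2 * π * w) with hh
  set V : ℝ → ℂ := fun w => f (2 * π * w) + ((2 * π * w : ℝ) : ℂ) * f' (2 * π * w) with hVdef
  have hhint : Integrable h := hfint.comp_mul_left' hpi0
  have hhU : ∀ w : ℝ, (w : ℂ) * h w = ((2 * π : ℝ) : ℂ)⁻¹ * (((2 * π * w : ℝ) : ℂ) * f (2 * π * w)) := by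
    intro w
    have : ((2 * π : ℝ) : ℂ) ≠ 0 := by exact_mod_cast hpi0
    rw [Complex.ofReal_mul (2 * π) w]
    field_simp
    simp [hh]
  have hUmem : MemLp (fun w : ℝ => (w : ℂ) * h w) 2 := by
    rw [memLp_two_iff_integrable_sq_norm (Continuous.aestronglyMeasurable (by fun_prop))]
    have := (hU2.comp_mul_left' hpi0).const_mul (((2 * π) ^ 2)⁻¹)
    refine this.congr (Eventually.of_forall fun w => ?_)
    simp only [hhU]
    rw [norm_mul (((2 * π : ℝ) : ℂ)⁻¹), mul_pow ‖((2 * π : ℝ) : ℂ)⁻¹‖]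
    congr 1
    simp [mul_pow, abs_of_pos Real.pi_pos]
  have hVmem : MemLp V 2 := by
    rw [memLp_two_iff_integrable_sq_norm]
    · exact hV2.comp_mul_left' hpi0
    · exact (hVm.comp (measurable_const_mul (2 * π))).aestronglyMeasurable
  have hhd : ∀ t : ℝ, HasDerivAt (fun w : ℝ => (w : ℂ) * h w) (V t) t := by
    intro t
    have h1 : HasDerivAt (fun w : ℝ => 2 * π * w) (2 * π) t := by
      simpa using (hasDerivAt_id t).const_mul (2 * π)
    have h2 := ((hd (2 * π * t)).scomp t h1).const_mul (((2 * π : ℝ) : ℂ)⁻¹)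
    have h3 : (fun w : ℝ => (w : ℂ) * h w) = fun w => ((2 * π : ℝ) : ℂ)⁻¹ * (((2 * π * w : ℝ) : ℂ) * f (2 * π * w)) :=
      funext hhU
    rw [h3]
    rw [Complex.real_smul, inv_mul_cancel_left₀ (by exact_mod_cast hpi0)] at h2
    exact h2
  refine ⟨fun x => (𝓕 h x).re, density_of_charFun_integrable μ h (fun w => hfc _) hhint, ?_⟩
  have hb := eVar_bound h V hhint hUmem hVmem hhd
  have eU : ∫ w : ℝ, ‖(w : ℂ) * h w‖ ^ 2 = ((2 * π) ^ 3)⁻¹ * ∫ t : ℝ, ‖(t : ℂ) * f t‖ ^ 2 := by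
    have := Measure.integral_comp_mul_left (fun t : ℝ => ‖(t : ℂ) * f t‖ ^ 2) (2 * π)
    rw [abs_of_pos (by positivity), smul_eq_mul] at this
    have h3 : ((2 * π) ^ 3)⁻¹ = ((2 * π) ^ 2)⁻¹ * (2 * π)⁻¹ := by field_simp
    rw [h3, mul_assoc, ← this, ← integral_const_mul]
    congr 1; ext w
    rw [hhU, norm_mul (((2 * π : ℝ) : ℂ)⁻¹), mul_pow]
    congr 1
    simp [mul_pow, abs_of_pos Real.pi_pos]
  have eV : ∫ w : ℝ, ‖V w‖ ^ 2 = (2 * π)⁻¹ * ∫ t : ℝ, ‖f t + (t : ℂ) * f' t‖ ^ 2 := by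
    have := Measure.integral_comp_mul_left (fun t : ℝ => ‖f t + (t : ℂ) * f' t‖ ^ 2) (2 * π)
    rw [abs_of_pos (by positivity), smul_eq_mul] at this
    exact this
  rw [eU, eV, final_const _ _ (integral_nonneg fun _ => by positivity)
    (integral_nonneg fun _ => by positivity)] at hb
  exact hb
end

section
/- If X has density p, then for any s ≥ 1 and all x ∈ ℝ, p(x) ≤ C/(1+|x|^s) with C = s β_{s−1} + √((1+β_{2s}) I(X)), where β_r = E|X|^r; moreover if C < ∞ then (1+|x|^s) p(x) → 0 as |x| → ∞. -/
open MeasureTheory Real Filter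

lemma ii_of_ftc (p p' : ℝ → ℝ) (hint : Integrable p) (h1 : ∫ x, p x = 1)
    (hFTC : ∀ a b : ℝ, p b - p a = ∫ x in a..b, p' x) (a b : ℝ) :
    IntervalIntegrable p' volume a b := by
  have Z : ∀ a b : ℝ, a ≤ b → ¬ IntervalIntegrable p' volume a b →
      ∀ c, c ≤ a ∨ b ≤ c → p c = 0 := by
    intro a b hab hn
    have key : ∀ c e, c ≤ a → b ≤ e → p e = p c := by
      intro c e hc he
      have h : ¬ IntervalIntegrable p' volume c e := by
        intro h
        apply hn
        apply h.mono_set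
        rw [Set.uIcc_of_le hab, Set.uIcc_of_le (by linarith)]
        exact Set.Icc_subset_Icc hc he
      have := hFTC c e
      rw [intervalIntegral.integral_undef h] at this
      linarith
    have hk : p b = 0 := by
      have h2 : IntegrableOn (fun _ : ℝ => p b) (Set.Iic a) :=
        hint.integrableOn.congr_fun (fun c hc => (key c b hc le_rfl).symm) measurableSet_Iic
      rw [integrableOn_const_iff] at h2
      simpa using h2
    intro c hc
    rcases hc with hc | hc
    · rw [← key c b hc le_rfl, hk]
    · rw [key a c le_rfl hc, ← key a b le_rfl le_rfl, hk]
  have W : ∀ a b : ℝ, a ≤ b → IntervalIntegrable p' volume a b := by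
    intro a b hab
    by_contra hn
    have hz : ∀ c, p c = 0 := by
      intro c
      by_cases h : c ≤ a ∨ b ≤ c
      · exact Z a b hab hn c h
      · push Not at h
        by_cases h2 : IntervalIntegrable p' volume a c
        · have h3 : ¬ IntervalIntegrable p' volume c b := fun h3 => hn (h2.trans h3)
          exact Z c b h.2.le h3 c (Or.inl le_rfl)
        · exact Z a c h.1.le h2 c (Or.inr le_rfl)
    simp [hz] at h1
  rcases le_total a b with h | h
  · exact W a b h
  · exact (W b a h).symm

lemma ac_of_ftc (f f' : ℝ → ℝ) (hf' : ∀ a b, IntervalIntegrable f' volume a b)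
    (hf : ∀ a b : ℝ, f b - f a = ∫ x in a..b, f' x) (a b : ℝ) :
    AbsolutelyContinuousOnInterval f a b := by
  have h := (hf' a b).absolutelyContinuousOnInterval_intervalIntegral (c := a) (by simp)
  have hc : AbsolutelyContinuousOnInterval (fun _ : ℝ => f a) a b :=
    (contDiff_const.contDiffOn).absolutelyContinuousOnInterval
  have : f = (fun _ : ℝ => f a) + fun x => ∫ t in a..x, f' t := by
    funext x
    simp [← hf]
  rw [this]
  exact hc.add h

lemma deriv_of_ftc (f f' : ℝ → ℝ) (hf' : ∀ a b, IntervalIntegrable f' volume a b)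
    (hf : ∀ a b : ℝ, f b - f a = ∫ x in a..b, f' x) (a b : ℝ) :
    ∀ᵐ x, x ∈ Set.uIcc a b → deriv f x = f' x := by
  filter_upwards [(hf' a b).ae_hasDerivAt_integral] with x hx hm
  have h := (hx hm a (by simp)).const_add (f a)
  have : f = fun x => f a + ∫ t in a..x, f' t := by
    funext x
    simp [← hf]
  rw [this]
  exact h.deriv

lemma prod_ftc (f f' g g' : ℝ → ℝ) (hf' : ∀ a b, IntervalIntegrable f' volume a b)
    (hf : ∀ a b : ℝ, f b - f a = ∫ x in a..b, f' x)
    (hg' : ∀ a b, IntervalIntegrable g' volume a b)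
    (hg : ∀ a b : ℝ, g b - g a = ∫ x in a..b, g' x) (a b : ℝ) :
    f b * g b - f a * g a = ∫ x in a..b, (f' x * g x + f x * g' x) := by
  rw [← (ac_of_ftc f f' hf' hf a b).integral_deriv_mul_eq_sub (ac_of_ftc g g' hg' hg a b)]
  apply intervalIntegral.integral_congr_ae
  filter_upwards [deriv_of_ftc f f' hf' hf a b, deriv_of_ftc g g' hg' hg a b] with x h1 h2 hx
  rw [h1 (Set.uIoc_subset_uIcc hx), h2 (Set.uIoc_subset_uIcc hx)]

lemma wd_ii (s : ℝ) (hs : 1 ≤ s) (a b : ℝ) :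
    IntervalIntegrable (fun x : ℝ => s * |x| ^ (s - 1) * SignType.sign x) volume a b := by
  have hc : Continuous (fun x : ℝ => s * |x| ^ (s - 1)) :=
    continuous_const.mul (continuous_abs.rpow_const (fun x => Or.inr (by linarith)))
  have hm : Measurable (fun x : ℝ => ((SignType.sign x : SignType) : ℝ)) := by
    have : (fun x : ℝ => ((SignType.sign x : SignType) : ℝ)) =
      fun x => if 0 < x then 1 else if x < 0 then -1 else 0 := by
      funext x
      rcases lt_trichotomy x 0 with h | h | h
      · simp [h, h.not_gt]
      · simp [h]
      · simp [h]
    rw [this]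
    exact Measurable.ite measurableSet_Ioi measurable_const
      (Measurable.ite measurableSet_Iio measurable_const measurable_const)
  refine (hc.intervalIntegrable a b).mono_fun (hc.measurable.mul hm).aestronglyMeasurable ?_
  refine Eventually.of_forall fun x => ?_
  simp only [norm_mul]
  have : ‖((SignType.sign x : SignType) : ℝ)‖ ≤ 1 := by
    rcases lt_trichotomy x 0 with h | h | h <;> simp [h]
  exact mul_le_of_le_one_right (by positivity) this

lemma w_ftc (s : ℝ) (hs : 1 ≤ s) (a b : ℝ) :
    (1 + |b| ^ s) - (1 + |a| ^ s) = ∫ x in a..b, s * |x| ^ (s - 1) * SignType.sign x := by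
  symm
  apply integral_eq_of_hasDerivAt_off_countable (fun x : ℝ => 1 + |x| ^ s) _ (Set.countable_singleton (0:ℝ))
  · exact (continuous_const.add (continuous_abs.rpow_const
      (fun x => Or.inr (by linarith)))).continuousOn
  · intro x hx
    have hx0 : x ≠ 0 := by simpa using hx.2
    have h := ((hasDerivAt_abs hx0).rpow_const (p := s) (Or.inl (by simpa using hx0))).const_add 1
    convert h using 1
    ring
  · exact wd_ii s hs a b

lemma decay_of_ftc (g G : ℝ → ℝ) (hg : Integrable g) (hG : Integrable G)
    (hF : ∀ a b : ℝ, g b - g a = ∫ x in a..b, G x) :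
    Tendsto g (cocompact ℝ) (nhds 0) ∧ ∀ x, 2 * g x ≤ ∫ y, |G y| := by
  have ht : ∀ a, Tendsto g atTop (nhds (g a + ∫ x in Set.Ioi a, G x)) := by
    intro a
    have := (intervalIntegral_tendsto_integral_Ioi a hG.integrableOn
      tendsto_id).const_add (g a)
    refine this.congr fun b => ?_
    simp [← hF]
  have hb : ∀ a, Tendsto g atBot (nhds (g a - ∫ x in Set.Iic a, G x)) := by
    intro a
    have := (intervalIntegral_tendsto_integral_Iic a hG.integrableOn
      tendsto_id).const_sub (g a)
    refine this.congr fun b => ?_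
    simp [← hF]
  have ht0 : ∀ a, g a + ∫ x in Set.Ioi a, G x = 0 := by
    intro a
    refine IntegrableAtFilter.eq_zero_of_tendsto (μ := volume) (hg.integrableAtFilter _) ?_ (ht a)
    intro s hs
    obtain ⟨c, hc⟩ := mem_atTop_sets.1 hs
    exact top_unique (le_trans (by simp) (measure_mono (μ := volume) (s := Set.Ici c) hc))
  have hb0 : ∀ a, g a - ∫ x in Set.Iic a, G x = 0 := by
    intro a
    refine IntegrableAtFilter.eq_zero_of_tendsto (μ := volume) (hg.integrableAtFilter _) ?_ (hb a)
    intro s hs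
    obtain ⟨c, hc⟩ := mem_atBot_sets.1 hs
    exact top_unique (le_trans (by simp) (measure_mono (μ := volume) (s := Set.Iic c) hc))
  refine ⟨?_, fun x => ?_⟩
  · rw [cocompact_eq_atBot_atTop]
    exact Tendsto.sup (hb0 0 ▸ hb 0) (ht0 0 ▸ ht 0)
  · have e := intervalIntegral.integral_Iic_add_Ioi (b := x) hG.abs.integrableOn hG.abs.integrableOn
    have e1 : |∫ y in Set.Iic x, G y| ≤ ∫ y in Set.Iic x, |G y| := abs_integral_le_integral_abs
    have e2 : |∫ y in Set.Ioi x, G y| ≤ ∫ y in Set.Ioi x, |G y| := abs_integral_le_integral_abs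
    have e3 := le_abs_self (∫ y in Set.Iic x, G y)
    have e4 := neg_abs_le (∫ y in Set.Ioi x, G y)
    linarith [ht0 x, hb0 x]


/-- If `X` has density `p` with Fisher information `I` and absolute moments
`β_r = ∫ |x|^r p(x) dx`, then for `s ≥ 1` and all `x`, `p(x) ≤ C / (1 + |x|^s)` with
`C = s β_{s-1} + √((1 + β_{2s}) I)`; moreover `(1 + |x|^s) p(x) → 0` as `|x| → ∞`. -/
theorem density_decay_bound
    (p p' : ℝ → ℝ) (s I C : ℝ) (hs : 1 ≤ s)
    (hnn : ∀ x, 0 ≤ p x) (hint : Integrable p) (h1 : ∫ x, p x = 1)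
    (hFTC : ∀ a b : ℝ, p b - p a = ∫ x in a..b, p' x)
    (hconv : ∀ x, p x = 0 → p' x = 0)
    (hIfin : IntegrableOn (fun x => (p' x) ^ 2 / p x) {x | 0 < p x})
    (hI : I = ∫ x in {x | 0 < p x}, (p' x) ^ 2 / p x)
    (hmom1 : Integrable (fun x => |x| ^ (s - 1) * p x))
    (hmom2 : Integrable (fun x => |x| ^ (2 * s) * p x))
    (hC : C = s * (∫ x, |x| ^ (s - 1) * p x) +
      Real.sqrt ((1 + ∫ x, |x| ^ (2 * s) * p x) * I)) :
    (∀ x, p x ≤ C / (1 + |x| ^ s)) ∧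
      Tendsto (fun x => (1 + |x| ^ s) * p x) (cocompact ℝ) (nhds 0) := by
  have hII := ii_of_ftc p p' hint h1 hFTC
  set w : ℝ → ℝ := fun x => 1 + |x| ^ s with hw
  set d : ℝ → ℝ := fun x => s * |x| ^ (s - 1) * SignType.sign x with hd
  have hwc : Continuous w := continuous_const.add (continuous_abs.rpow_const
      (fun x => Or.inr (by linarith)))
  have hw1 : ∀ x, 1 ≤ w x := fun x => by
    have : 0 ≤ |x| ^ s := by positivity
    simp only [hw]; linarith
  have hsq : ∀ x : ℝ, |x| ^ (2 * s) = (|x| ^ s) ^ 2 := fun x => by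
    rw [mul_comm, Real.rpow_mul (abs_nonneg x)]; norm_cast
  -- the Fisher integrand on the whole line
  set J : ℝ → ℝ := fun x => (p' x) ^ 2 / p x with hJ
  have hJ0 : ∀ x, x ∉ {x | 0 < p x} → J x = 0 := by
    intro x hx
    have : p x = 0 := le_antisymm (not_lt.1 hx) (hnn x)
    simp [hJ, this]
  have hsupp : Function.support J ⊆ {x | 0 < p x} := fun x hx => by
    by_contra h
    exact hx (hJ0 x h)
  have hJint : Integrable J := (integrableOn_iff_integrable_of_support_subset hsupp).1 hIfin
  have hIJ : I = ∫ x, J x := by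
    rw [hI]
    exact setIntegral_eq_integral_of_forall_compl_eq_zero hJ0
  have hJp : ∀ x, J x * p x = p' x ^ 2 := by
    intro x
    rcases (hnn x).eq_or_lt with h | h
    · simp [← h, hconv x h.symm]
    · simp only [hJ]; field_simp
  have hJnn : ∀ x, 0 ≤ J x := fun x => div_nonneg (sq_nonneg _) (hnn x)
  -- pointwise quadratic inequality
  have hquad : ∀ t x, 0 ≤ t ^ 2 * (w x ^ 2 * p x) - 2 * t * (w x * |p' x|) + J x := by
    intro t x
    have e : |p' x| = √(J x) * √(p x) := by
      rw [← Real.sqrt_mul (hJnn x), hJp, Real.sqrt_sq_eq_abs]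
    have := sq_nonneg (t * w x * √(p x) - √(J x))
    rw [e]
    have a1 := Real.sq_sqrt (hnn x)
    have a2 := Real.sq_sqrt (hJnn x)
    have : t ^ 2 * (w x ^ 2 * p x) - 2 * t * (w x * (√(J x) * √(p x))) + J x
        = (t * w x * √(p x) - √(J x)) ^ 2 := by
      linear_combination (-(t ^ 2 * w x ^ 2)) * a1 - a2
    rw [this]; positivity
  have hbd : Integrable (fun x => 2 * (p x + |x| ^ (2 * s) * p x)) :=
    (hint.add hmom2).const_mul 2
  have hw2 : ∀ x, w x ^ 2 * p x ≤ 2 * (p x + |x| ^ (2 * s) * p x) := by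
    intro x
    rw [hsq]
    simp only [hw]
    nlinarith [mul_nonneg (hnn x) (sq_nonneg (|x| ^ s - 1))]
  have hM : Integrable (fun x => w x ^ 2 * p x) := by
    refine hbd.mono' ((hwc.pow 2).aestronglyMeasurable.mul hint.1) (Eventually.of_forall fun x => ?_)
    rw [Real.norm_of_nonneg (mul_nonneg (sq_nonneg _) (hnn x))]
    exact hw2 x
  have hg : Integrable (fun x => w x * p x) := by
    refine hM.mono' (hwc.aestronglyMeasurable.mul hint.1) (Eventually.of_forall fun x => ?_)
    rw [Real.norm_of_nonneg (mul_nonneg (by linarith [hw1 x]) (hnn x))]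
    exact mul_le_mul_of_nonneg_right (by nlinarith [hw1 x]) (hnn x)
  have hp'm : AEStronglyMeasurable p' := by
    have : LocallyIntegrable p' := by
      intro x
      have h := (hII (x - 1) (x + 1)).1
      exact ⟨Set.Ioc (x - 1) (x + 1), Ioc_mem_nhds (by linarith) (by linarith), h⟩
    exact this.aestronglyMeasurable
  have hK : Integrable (fun x => w x * |p' x|) := by
    refine (hM.add hJint).mono' (hwc.aestronglyMeasurable.mul hp'm.norm)
      (Eventually.of_forall fun x => ?_)
    have h0 : 0 ≤ w x * |p' x| := mul_nonneg (by linarith [hw1 x]) (abs_nonneg _)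
    rw [Real.norm_of_nonneg h0]
    have := hquad 1 x
    simp only [Pi.add_apply]
    linarith
  have hKd : ∀ t : ℝ, 0 ≤ (∫ x, w x ^ 2 * p x) * (t * t)
      + (-2 * ∫ x, w x * |p' x|) * t + I := by
    intro t
    have h : 0 ≤ ∫ x, (t ^ 2 * (w x ^ 2 * p x) - 2 * t * (w x * |p' x|) + J x) :=
      integral_nonneg (hquad t)
    have hMK : Integrable (fun x => t ^ 2 * (w x ^ 2 * p x) - 2 * t * (w x * |p' x|)) :=
      (hM.const_mul _).sub (hK.const_mul _)
    rw [integral_add hMK hJint,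
      integral_sub (hM.const_mul _) (hK.const_mul _), integral_const_mul, integral_const_mul,
      ← hIJ] at h
    linarith
  have hdisc := discrim_le_zero hKd
  have hI0 : 0 ≤ I := hIJ ▸ integral_nonneg hJnn
  have hMle : (∫ x, w x ^ 2 * p x) ≤ 2 * (1 + ∫ x, |x| ^ (2 * s) * p x) := by
    have := integral_mono hM hbd hw2
    rwa [integral_const_mul, integral_add hint hmom2, h1] at this
  have hKC : (∫ x, w x * |p' x|) / 2 ≤ √((1 + ∫ x, |x| ^ (2 * s) * p x) * I) := by
    apply Real.le_sqrt_of_sq_le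
    have hb0 : 0 ≤ ∫ x, |x| ^ (2 * s) * p x :=
      integral_nonneg fun x => mul_nonneg (by positivity) (hnn x)
    unfold discrim at hdisc
    nlinarith [mul_le_mul_of_nonneg_right hMle hI0, mul_nonneg hb0 hI0]
  have hbG : ∀ x, |d x * p x + w x * p' x| ≤ s * (|x| ^ (s - 1) * p x) + w x * |p' x| := by
    intro x
    refine (abs_add_le _ _).trans (add_le_add ?_ ?_)
    · rw [abs_mul, abs_of_nonneg (hnn x), ← mul_assoc]
      refine mul_le_mul_of_nonneg_right ?_ (hnn x)
      simp only [hd]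
      have hs0 : 0 ≤ s * |x| ^ (s - 1) := by positivity
      rw [abs_mul, abs_of_nonneg hs0]
      refine mul_le_of_le_one_right hs0 ?_
      rcases lt_trichotomy x 0 with h | h | h <;> simp [h]
    · rw [abs_mul, abs_of_nonneg (by linarith [hw1 x] : 0 ≤ w x)]
  have hdm : AEStronglyMeasurable d := by
    have : LocallyIntegrable d := by
      intro x
      have h := (wd_ii s hs (x - 1) (x + 1)).1
      exact ⟨Set.Ioc (x - 1) (x + 1), Ioc_mem_nhds (by linarith) (by linarith), h⟩
    exact this.aestronglyMeasurable
  have hbi : Integrable (fun x => s * (|x| ^ (s - 1) * p x) + w x * |p' x|) :=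
    (hmom1.const_mul s).add hK
  have hG : Integrable (fun x => d x * p x + w x * p' x) :=
    hbi.mono' ((hdm.mul hint.1).add (hwc.aestronglyMeasurable.mul hp'm))
      (Eventually.of_forall hbG)
  obtain ⟨hlim, hle⟩ := decay_of_ftc (fun x => w x * p x) _ hg hG
    (prod_ftc w d p p' (wd_ii s hs) (w_ftc s hs) hII hFTC)
  refine ⟨fun x => ?_, hlim⟩
  rw [le_div_iff₀ (by linarith [hw1 x] : 0 < w x)]
  have h2 := integral_mono hG.abs hbi hbG
  rw [integral_add (hmom1.const_mul s) hK, integral_const_mul] at h2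
  have h3 := hle x
  have hb1 : 0 ≤ s * ∫ x, |x| ^ (s - 1) * p x :=
    mul_nonneg (by linarith) (integral_nonneg fun x => mul_nonneg (by positivity) (hnn x))
  rw [hC]
  change p x * w x ≤ _
  linarith
end
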